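/- arXiv:2512.00500 — 8 statements merged into one kernel-verified Lean document; each statement's English description precedes it below -/
import Mathlib

section
/- For every HyperLTL_prop formula ψ and every finite set W ⊆ [0,1], the set V_W(⟦ψ⟧) of attained satisfaction values of ψ, namely {⟦ψ⟧_Π^T : Π a trace assignment into 𝕋_W, T ⊆ 𝕋_W nonempty}, is contained in the inductively defined set V_W(ψ); in particular ψ has only finitely many possible satisfaction values over weights in W. -/
open Set

noncomputable section

/-- A (weighted) trace assigns to each time step and atomic proposition a weight in `[0,1]`. -/
abbrev Trace (AP : Type) : Type := ℕ → AP → unitInterval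

/-- The traces whose weights all belong to `W` (the set `𝕋_W`). -/
def TracesW {AP : Type} (W : Set ℝ) : Set (Trace AP) :=
  {t | ∀ i p, (t i p : ℝ) ∈ W}

/-- Shifting a trace assignment: `Π[i,∞]`. -/
def shiftA {AP Var : Type} (ρ : Var → Trace AP) (i : ℕ) : Var → Trace AP :=
  fun π n => ρ π (n + i)

/-- `prefMin g i = min_{0 ≤ j < i} g j` (with the empty minimum being `1`). -/
def prefMin (g : ℕ → ℝ) : ℕ → ℝ
  | 0 => 1
  | n + 1 => min (prefMin g n) (g n)

/-- A signature of function symbols, each interpreted as a map `[0,1]^k → [0,1]`. -/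
structure PropSig where
  Fn : Type
  arity : Fn → ℕ
  interp : (f : Fn) → (Fin (arity f) → ℝ) → ℝ
  interp_mem : ∀ (f : Fn) (x : Fin (arity f) → ℝ),
      (∀ i, x i ∈ Set.Icc (0:ℝ) 1) → interp f x ∈ Set.Icc (0:ℝ) 1

/-- Quantifier-free HyperLTL_prop formulas. -/
inductive PropQF (AP Var : Type) (S : PropSig) : Type where
  | tt : PropQF AP Var S
  | ff : PropQF AP Var S
  | atom : AP → Var → PropQF AP Var S
  | app : (f : S.Fn) → (Fin (S.arity f) → PropQF AP Var S) → PropQF AP Var S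
  | next : PropQF AP Var S → PropQF AP Var S
  | untl : PropQF AP Var S → PropQF AP Var S → PropQF AP Var S

/-- HyperLTL_prop formulas: a prefix of quantifiers over a quantifier-free formula. -/
inductive PropForm (AP Var : Type) (S : PropSig) : Type where
  | qf : PropQF AP Var S → PropForm AP Var S
  | ex : Var → PropForm AP Var S → PropForm AP Var S
  | all : Var → PropForm AP Var S → PropForm AP Var S

variable {AP Var : Type} {S : PropSig}

/-- Satisfaction value of quantifier-free formulas. -/
def semQF : PropQF AP Var S → (Var → Trace AP) → Set (Trace AP) → ℝ
  | .tt, _, _ => 1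
  | .ff, _, _ => 0
  | .atom p π, ρ, _ => (ρ π 0 p : ℝ)
  | .app f args, ρ, T => S.interp f fun i => semQF (args i) ρ T
  | .next φ, ρ, T => semQF φ (shiftA ρ 1) T
  | .untl φ₁ φ₂, ρ, T =>
      ⨆ i : ℕ, min (semQF φ₂ (shiftA ρ i) T)
        (prefMin (fun j => semQF φ₁ (shiftA ρ j) T) i)

/-- Satisfaction value `⟦ψ⟧_Π^T` of HyperLTL_prop formulas. -/
def sem [DecidableEq Var] :
    PropForm AP Var S → (Var → Trace AP) → Set (Trace AP) → ℝ
  | .qf φ, ρ, T => semQF φ ρ T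
  | .ex π ψ, ρ, T => sSup ((fun t => sem ψ (Function.update ρ π t) T) '' T)
  | .all π ψ, ρ, T => sInf ((fun t => sem ψ (Function.update ρ π t) T) '' T)

/-- The inductively defined over-approximation `V_W(φ)` for quantifier-free formulas. -/
def VWqf (W : Set ℝ) : PropQF AP Var S → Set ℝ
  | .tt => {0, 1}
  | .ff => {0, 1}
  | .atom _ _ => W ∪ {0, 1}
  | .app f args =>
      {v | ∃ x : Fin (S.arity f) → ℝ, (∀ i, x i ∈ VWqf W (args i)) ∧ v = S.interp f x}
  | .next φ => VWqf W φ
  | .untl φ₁ φ₂ => VWqf W φ₁ ∪ VWqf W φ₂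

/-- The inductively defined set `V_W(ψ)`. -/
def VW (W : Set ℝ) : PropForm AP Var S → Set ℝ
  | .qf φ => VWqf W φ
  | .ex _ ψ => VW W ψ
  | .all _ ψ => VW W ψ

/-!
Until and the quantifiers only take suprema and infima of values lying in a set that is finite by
induction, so these are attained. The empty minimum of an until formula contributes the value `1`,
which need not belong to the set of the left operand; it is absorbed because the value of the right
operand is at most `1`.
-/

lemma csSup_mem_of_subset_finite {α : Type*} [ConditionallyCompleteLinearOrder α] {s t : Set α}
    (hs : s.Nonempty) (hst : s ⊆ t) (ht : t.Finite) : sSup s ∈ t :=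
  hst (hs.csSup_mem (ht.subset hst))

lemma csInf_mem_of_subset_finite {α : Type*} [ConditionallyCompleteLinearOrder α] {s t : Set α}
    (hs : s.Nonempty) (hst : s ⊆ t) (ht : t.Finite) : sInf s ∈ t :=
  hst (hs.csInf_mem (ht.subset hst))

lemma prefMin_mem_insert_one {s : Set ℝ} {g : ℕ → ℝ} (hg : ∀ j, g j ∈ s) (i : ℕ) :
    prefMin g i ∈ insert 1 s := by
  induction i with
  | zero => exact mem_insert 1 s
  | succ i ih => exact min_rec' (· ∈ insert 1 s) ih (mem_insert_of_mem 1 (hg i))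

lemma min_prefMin_mem_union {s t : Set ℝ} {g : ℕ → ℝ} {a : ℝ} (hg : ∀ j, g j ∈ s) (ha : a ∈ t)
    (ha_le : a ≤ 1) (i : ℕ) : min a (prefMin g i) ∈ s ∪ t := by
  rcases prefMin_mem_insert_one hg i with h_one | h_mem
  · rw [h_one, min_eq_left ha_le]
    exact Or.inr ha
  · exact min_rec' (· ∈ s ∪ t) (Or.inr ha) (Or.inl h_mem)

lemma semQF_mem_Icc (φ : PropQF AP Var S) (ρ : Var → Trace AP) (T : Set (Trace AP)) :
    semQF φ ρ T ∈ Icc (0 : ℝ) 1 := by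
  induction φ generalizing ρ with
  | tt => exact ⟨zero_le_one, le_rfl⟩
  | ff => exact ⟨le_rfl, zero_le_one⟩
  | atom p π => exact (ρ π 0 p).2
  | app f args ih => exact S.interp_mem f _ fun i => ih i ρ
  | next _ ih => exact ih (shiftA ρ 1)
  | untl φ₁ φ₂ ih₁ ih₂ =>
    have hmem (i : ℕ) : min (semQF φ₂ (shiftA ρ i) T)
        (prefMin (fun j => semQF φ₁ (shiftA ρ j) T) i) ∈ Icc (0 : ℝ) 1 := by
      simpa only [union_self] using
        min_prefMin_mem_union (fun j => ih₁ (shiftA ρ j)) (ih₂ (shiftA ρ i)) (ih₂ _).2 i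
    exact ⟨Real.iSup_nonneg fun i => (hmem i).1, ciSup_le fun i => (hmem i).2⟩

lemma finite_VWqf {W : Set ℝ} (hW : W.Finite) (φ : PropQF AP Var S) : (VWqf W φ).Finite := by
  induction φ with
  | tt => exact toFinite {0, 1}
  | ff => exact toFinite {0, 1}
  | atom _ _ => exact hW.union (toFinite {0, 1})
  | app f args ih =>
    exact ((Finite.pi' ih).image (S.interp f)).subset fun _ ⟨x, hx, hv⟩ => ⟨x, hx, hv.symm⟩
  | next _ ih => exact ih
  | untl φ₁ φ₂ ih₁ ih₂ => exact ih₁.union ih₂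

lemma finite_VW {W : Set ℝ} (hW : W.Finite) (ψ : PropForm AP Var S) : (VW W ψ).Finite := by
  induction ψ with
  | qf φ => exact finite_VWqf hW φ
  | ex _ _ ih => exact ih
  | all _ _ ih => exact ih

lemma shiftA_mem_TracesW {W : Set ℝ} {ρ : Var → Trace AP} (hρ : ∀ π, ρ π ∈ TracesW W) (i : ℕ)
    (π : Var) : shiftA ρ i π ∈ TracesW W :=
  fun n p => hρ π (n + i) p

lemma update_mem_TracesW [DecidableEq Var] {W : Set ℝ} {ρ : Var → Trace AP} {t : Trace AP}
    (hρ : ∀ π, ρ π ∈ TracesW W) (ht : t ∈ TracesW W) (π σ : Var) :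
    Function.update ρ π t σ ∈ TracesW W :=
  (Function.forall_update_iff ρ fun _ s => s ∈ TracesW W).2 ⟨ht, fun σ _ => hρ σ⟩ σ

lemma semQF_mem_VWqf {W : Set ℝ} (hW : W.Finite) (φ : PropQF AP Var S) {ρ : Var → Trace AP}
    (hρ : ∀ π, ρ π ∈ TracesW W) (T : Set (Trace AP)) : semQF φ ρ T ∈ VWqf W φ := by
  induction φ generalizing ρ with
  | tt => exact Or.inr rfl
  | ff => exact Or.inl rfl
  | atom p π => exact Or.inl (hρ π 0 p)
  | app f args ih => exact ⟨_, fun i => ih i hρ, rfl⟩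
  | next _ ih => exact ih (shiftA_mem_TracesW hρ 1)
  | untl φ₁ φ₂ ih₁ ih₂ =>
    refine csSup_mem_of_subset_finite (range_nonempty _) (range_subset_iff.2 fun i => ?_)
      (finite_VWqf hW (.untl φ₁ φ₂))
    exact min_prefMin_mem_union (fun j => ih₁ (shiftA_mem_TracesW hρ j))
      (ih₂ (shiftA_mem_TracesW hρ i)) (semQF_mem_Icc φ₂ (shiftA ρ i) T).2 i

lemma sem_mem_VW [DecidableEq Var] {W : Set ℝ} (hW : W.Finite) (ψ : PropForm AP Var S)
    {ρ : Var → Trace AP} (hρ : ∀ π, ρ π ∈ TracesW W) {T : Set (Trace AP)} (hT : T ⊆ TracesW W)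
    (hT_ne : T.Nonempty) : sem ψ ρ T ∈ VW W ψ := by
  induction ψ generalizing ρ with
  | qf φ => exact semQF_mem_VWqf hW φ hρ T
  | ex π ψ ih =>
    exact csSup_mem_of_subset_finite (hT_ne.image _)
      (image_subset_iff.2 fun _ ht => ih (update_mem_TracesW hρ (hT ht) π)) (finite_VW hW ψ)
  | all π ψ ih =>
    exact csInf_mem_of_subset_finite (hT_ne.image _)
      (image_subset_iff.2 fun _ ht => ih (update_mem_TracesW hρ (hT ht) π)) (finite_VW hW ψ)

/-- The set `V_W(⟦ψ⟧)` of satisfaction values that `ψ` attains over traces with weights in `W`;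
trace assignments are total. -/
def attainedValues [DecidableEq Var] (W : Set ℝ) (ψ : PropForm AP Var S) : Set ℝ :=
  {v : ℝ | ∃ (ρ : Var → Trace AP) (T : Set (Trace AP)),
    (∀ π, ρ π ∈ TracesW W) ∧ T ⊆ TracesW W ∧ T.Nonempty ∧ v = sem ψ ρ T}

lemma attainedValues_subset_VW [DecidableEq Var] {W : Set ℝ} (hW : W.Finite)
    (ψ : PropForm AP Var S) : attainedValues W ψ ⊆ VW W ψ := by
  rintro _ ⟨ρ, T, hρ, hT, hT_ne, rfl⟩
  exact sem_mem_VW hW ψ hρ hT hT_ne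

theorem stmt_0_general [DecidableEq Var] {W : Set ℝ} (hW : W.Finite) (ψ : PropForm AP Var S) :
    attainedValues W ψ ⊆ VW W ψ ∧ (attainedValues W ψ).Finite :=
  have hsub := attainedValues_subset_VW hW ψ
  ⟨hsub, (finite_VW hW ψ).subset hsub⟩

/-- For every HyperLTL_prop formula `ψ` and every finite `W ⊆ [0,1]`, the
set of attained satisfaction values of `ψ` over traces with weights in `W` is contained in
the inductively defined set `V_W(ψ)`; in particular it is finite. -/
theorem stmt_0 [DecidableEq Var]
    (W : Set ℝ) (hWfin : W.Finite) (hWsub : W ⊆ Set.Icc (0:ℝ) 1)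
    (ψ : PropForm AP Var S) :
    {v : ℝ | ∃ (ρ : Var → Trace AP) (T : Set (Trace AP)),
        (∀ π, ρ π ∈ TracesW W) ∧ T ⊆ TracesW W ∧ T.Nonempty ∧ v = sem ψ ρ T}
      ⊆ VW W ψ ∧
    {v : ℝ | ∃ (ρ : Var → Trace AP) (T : Set (Trace AP)),
        (∀ π, ρ π ∈ TracesW W) ∧ T ⊆ TracesW W ∧ T.Nonempty ∧ v = sem ψ ρ T}.Finite :=
  stmt_0_general hWfin ψ

end
end

section
/- Let p ∈ AP, let ⊕ be the binary function ⊕(x,y) = (x+y)/2 on [0,1], let ψ' = ∀π' ((¬p_π) ⊕ p_{π'}) and ψ = ∃π ψ'. Then: (a) there exist a trace assignment Π into Boolean traces and a nonempty set T of Boolean traces with ⟦ψ'⟧_Π^T = 0 (e.g. T = {t} with t[0](p) = 0 and Π(π)[0](p) = 1); and (b) for every trace assignment Π and every nonempty set T of Boolean traces, ⟦ψ⟧_Π^T ≥ 1/2. Consequently 0 lies in V_{{0,1}}(ψ) but not in the set of attained satisfaction values of ψ over Boolean traces, so the inclusion V_{{0,1}}(⟦ψ⟧) ⊆ V_{{0,1}}(ψ)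 is strict. -/
open Set

noncomputable section

/-- Boolean traces: all weights are `0` or `1`. -/
def IsBoolTrace {AP : Type} (t : Trace AP) : Prop :=
  ∀ i p, (t i p : ℝ) = 0 ∨ (t i p : ℝ) = 1

variable {AP Var : Type} {S : PropSig}

/-- The two function symbols used in Statement 2: `¬x = 1 - x` and `⊕(x,y) = (x+y)/2`. -/
inductive Fn2 : Type where
  | neg : Fn2
  | oplus : Fn2

def arity2 : Fn2 → ℕ
  | .neg => 1
  | .oplus => 2

def interp2 : (f : Fn2) → (Fin (arity2 f) → ℝ) → ℝ
  | .neg, x => 1 - x ⟨0, by simp [arity2]⟩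
  | .oplus, x => (x ⟨0, by simp [arity2]⟩ + x ⟨1, by simp [arity2]⟩) / 2

/-- The signature with `¬` and `⊕`. -/
def sig2 : PropSig where
  Fn := Fn2
  arity := arity2
  interp := interp2
  interp_mem := by
    intro f x hx
    cases f with
    | neg =>
        have h0 := hx ⟨0, by simp [arity2]⟩
        simp only [interp2, Set.mem_Icc] at *
        constructor <;> linarith [h0.1, h0.2]
    | oplus =>
        have h0 := hx ⟨0, by simp [arity2]⟩
        have h1 := hx ⟨1, by simp [arity2]⟩
        simp only [interp2, Set.mem_Icc] at *
        constructor <;> linarith [h0.1, h0.2, h1.1, h1.2]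

/-- The formula `ψ' = ∀π' ((¬p_π) ⊕ p_{π'})`. -/
def psi' (p : AP) (π π' : Var) : PropForm AP Var sig2 :=
  .all π' (.qf (.app .oplus ![.app .neg ![.atom p π], .atom p π']))

/-- The formula `ψ = ∃π ψ'`. -/
def psi (p : AP) (π π' : Var) : PropForm AP Var sig2 :=
  .ex π (psi' p π π')

/-! Let `m` be the infimum of the initial `p`-weights over `T`. The map `x ↦ (1 - a + x) / 2` is
increasing and continuous, so `ψ'` has the value `(1 - a + m) / 2`, where `a` is the initial
`p`-weight of the trace bound to `π`. This is decreasing and continuous in `a`, so the supremum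
over `a` is its value at `a = m`. Hence `ψ` has the value `1/2` on every nonempty `T`, whereas
`V_W(ψ)`, which treats the two occurrences of `p` as independent, also contains
`((1 - 1) + 0) / 2 = 0`. -/

section Operators

variable (ρ : Var → Trace AP) (T : Set (Trace AP)) {W : Set ℝ} {φ φ₁ φ₂ : PropQF AP Var sig2}
  {v v₁ v₂ : ℝ}

theorem semQF_atom (p : AP) (π : Var) :
    semQF (.atom p π : PropQF AP Var S) ρ T = ρ π 0 p :=
  rfl

theorem semQF_neg :
    semQF (.app .neg ![φ] : PropQF AP Var sig2) ρ T = 1 - semQF φ ρ T :=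
  rfl

theorem semQF_oplus :
    semQF (.app .oplus ![φ₁, φ₂] : PropQF AP Var sig2) ρ T =
      (semQF φ₁ ρ T + semQF φ₂ ρ T) / 2 :=
  rfl

theorem one_sub_mem_VWqf_neg (hv : v ∈ VWqf W φ) :
    1 - v ∈ VWqf W (.app .neg ![φ] : PropQF AP Var sig2) :=
  ⟨![v], Fin.forall_fin_one.2 hv, rfl⟩

theorem add_div_two_mem_VWqf_oplus (hv₁ : v₁ ∈ VWqf W φ₁) (hv₂ : v₂ ∈ VWqf W φ₂) :
    (v₁ + v₂) / 2 ∈ VWqf W (.app .oplus ![φ₁, φ₂] : PropQF AP Var sig2) :=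
  ⟨![v₁, v₂], Fin.forall_fin_two.2 ⟨hv₁, hv₂⟩, rfl⟩

end Operators

/-- The infimum over `T` of the weights of `p` at time `0`, that is, the value of `∀π p_π`. -/
def infInitialWeight (p : AP) (T : Set (Trace AP)) : ℝ :=
  sInf ((fun t => (t 0 p : ℝ)) '' T)

section InitialWeight

variable (p : AP) {T : Set (Trace AP)} {f : ℝ → ℝ}

theorem bddBelow_initialWeight : BddBelow ((fun t : Trace AP => (t 0 p : ℝ)) '' T) :=
  ⟨0, forall_mem_image.2 fun t _ => (t 0 p).2.1⟩

theorem sInf_image_initialWeight_of_monotone (hT : T.Nonempty) (hf : Monotone f)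
    (hcont : ContinuousAt f (infInitialWeight p T)) :
    sInf ((fun t : Trace AP => f (t 0 p)) '' T) = f (infInitialWeight p T) := by
  simpa only [infInitialWeight, image_image] using
    (hf.map_csInf_of_continuousAt hcont (hT.image _) (bddBelow_initialWeight p)).symm

theorem sSup_image_initialWeight_of_antitone (hT : T.Nonempty) (hf : Antitone f)
    (hcont : ContinuousAt f (infInitialWeight p T)) :
    sSup ((fun t : Trace AP => f (t 0 p)) '' T) = f (infInitialWeight p T) := by
  simpa only [infInitialWeight, image_image] using
    (hf.map_csInf_of_continuousAt hcont (hT.image _) (bddBelow_initialWeight p)).symm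

end InitialWeight

section Values

variable [DecidableEq Var] (p : AP) {π π' : Var} (hne : π ≠ π') (ρ : Var → Trace AP)
  {T : Set (Trace AP)} (hT : T.Nonempty)

include hne hT

theorem sem_psi'_eq : sem (psi' p π π') ρ T = (1 - ρ π 0 p + infInitialWeight p T) / 2 := by
  have hmono : Monotone fun x : ℝ => (1 - ρ π 0 p + x) / 2 := by
    intro x y hxy
    dsimp only
    gcongr
  simpa only [psi', sem, semQF_oplus, semQF_neg, semQF_atom, Function.update_of_ne hne,
    Function.update_self] using sInf_image_initialWeight_of_monotone p hT hmono (by fun_prop)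

theorem sem_psi_eq_one_half : sem (psi p π π') ρ T = 1 / 2 := by
  set m := infInitialWeight p T with hm
  have hanti : Antitone fun x : ℝ => (1 - x + m) / 2 := by
    intro x y hxy
    dsimp only
    gcongr
  calc
    sem (psi p π π') ρ T = sSup ((fun t : Trace AP => (1 - (t 0 p : ℝ) + m) / 2) '' T) := by
      simp only [psi, sem, sem_psi'_eq p hne _ hT, Function.update_self, hm]
    _ = (1 - m + m) / 2 := sSup_image_initialWeight_of_antitone p hT hanti (by fun_prop)
    _ = 1 / 2 := by ring

end Values

theorem exists_boolTrace_sem_psi'_eq_zero [DecidableEq Var] (p : AP) {π π' : Var}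
    (hne : π ≠ π') :
    ∃ (ρ : Var → Trace AP) (T : Set (Trace AP)),
      (∀ v, IsBoolTrace (ρ v)) ∧ T ⊆ {t | IsBoolTrace t} ∧ T.Nonempty ∧
      sem (psi' p π π') ρ T = 0 := by
  refine ⟨1, {0}, fun _ _ _ => Or.inr rfl, singleton_subset_iff.2 fun _ _ => Or.inl rfl,
    singleton_nonempty 0, ?_⟩
  simp [sem_psi'_eq p hne _ (singleton_nonempty _), infInitialWeight]

theorem mem_VW_psi {W : Set ℝ} (p : AP) (π π' : Var) {a b : ℝ} (ha : a ∈ W ∪ {0, 1})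
    (hb : b ∈ W ∪ {0, 1}) : (1 - a + b) / 2 ∈ VW W (psi p π π') :=
  add_div_two_mem_VWqf_oplus (one_sub_mem_VWqf_neg ha) hb

theorem zero_mem_VW_psi (W : Set ℝ) (p : AP) (π π' : Var) : 0 ∈ VW W (psi p π π') := by
  simpa using mem_VW_psi (W := W) p π π' (a := 1) (b := 0) (by simp) (by simp)

theorem one_half_mem_VW_psi (W : Set ℝ) (p : AP) (π π' : Var) :
    1 / 2 ∈ VW W (psi p π π') := by
  simpa using mem_VW_psi (W := W) p π π' (a := 0) (b := 0) (by simp) (by simp)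

/-- The set `V(⟦ψ⟧)` of satisfaction values of `ψ` over the traces in `𝒯`: trace assignments take
values in `𝒯` and sets of traces are nonempty subsets of `𝒯`. For the traces with weights in `W`
this is the `V_W(⟦ψ⟧)` that `V_W(ψ)` approximates. -/
def satValues [DecidableEq Var] (𝒯 : Set (Trace AP)) (ψ : PropForm AP Var S) : Set ℝ :=
  {v | ∃ (ρ : Var → Trace AP) (T : Set (Trace AP)),
    (∀ u, ρ u ∈ 𝒯) ∧ T ⊆ 𝒯 ∧ T.Nonempty ∧ v = sem ψ ρ T}

theorem satValues_psi_subset [DecidableEq Var] (𝒯 : Set (Trace AP)) (p : AP) {π π' : Var}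
    (hne : π ≠ π') : satValues 𝒯 (psi p π π') ⊆ {1 / 2} := by
  rintro _ ⟨ρ, T, -, -, hT, rfl⟩
  exact sem_psi_eq_one_half p hne ρ hT

theorem zero_notMem_satValues_psi [DecidableEq Var] (𝒯 : Set (Trace AP)) (p : AP) {π π' : Var}
    (hne : π ≠ π') : 0 ∉ satValues 𝒯 (psi p π π') := fun hzero => by
  simpa using satValues_psi_subset 𝒯 p hne hzero

theorem satValues_psi_ssubset_VW [DecidableEq Var] (𝒯 : Set (Trace AP)) (W : Set ℝ) (p : AP)
    {π π' : Var} (hne : π ≠ π') : satValues 𝒯 (psi p π π') ⊂ VW W (psi p π π') :=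
  (ssubset_iff_of_subset ((satValues_psi_subset 𝒯 p hne).trans
    (singleton_subset_iff.2 (one_half_mem_VW_psi W p π π')))).2
    ⟨0, zero_mem_VW_psi W p π π', zero_notMem_satValues_psi 𝒯 p hne⟩

theorem stmt_2_general [DecidableEq Var] (𝒯 : Set (Trace AP)) (W : Set ℝ) (p : AP)
    (π π' : Var) (hne : π ≠ π') :
    (∃ (ρ : Var → Trace AP) (T : Set (Trace AP)),
        (∀ v, IsBoolTrace (ρ v)) ∧ T ⊆ {t | IsBoolTrace t} ∧ T.Nonempty ∧
        sem (psi' p π π') ρ T = 0) ∧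
    (∀ (ρ : Var → Trace AP) (T : Set (Trace AP)),
        T.Nonempty → sem (psi p π π') ρ T = 1 / 2) ∧
    0 ∈ VW W (psi p π π') ∧
    0 ∉ satValues 𝒯 (psi p π π') ∧
    satValues 𝒯 (psi p π π') ⊂ VW W (psi p π π') :=
  ⟨exists_boolTrace_sem_psi'_eq_zero p hne, fun ρ _ => sem_psi_eq_one_half p hne ρ,
    zero_mem_VW_psi W p π π', zero_notMem_satValues_psi 𝒯 p hne,
    satValues_psi_ssubset_VW 𝒯 W p hne⟩

/-- (a) `ψ'` attains the value `0` over Boolean traces; (b) `ψ` always has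
value at least `1/2` over Boolean traces; consequently `0 ∈ V_{{0,1}}(ψ)` but `0` is not an
attained satisfaction value of `ψ`, so the inclusion `V_{{0,1}}(⟦ψ⟧) ⊆ V_{{0,1}}(ψ)` is
strict. -/
theorem stmt_2 [DecidableEq Var] (p : AP) (π π' : Var) (hne : π ≠ π') :
    (∃ (ρ : Var → Trace AP) (T : Set (Trace AP)),
        (∀ v, IsBoolTrace (ρ v)) ∧ T ⊆ {t | IsBoolTrace t} ∧ T.Nonempty ∧
        sem (psi' p π π') ρ T = 0) ∧
    (∀ (ρ : Var → Trace AP) (T : Set (Trace AP)),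
        T ⊆ {t | IsBoolTrace t} → T.Nonempty → 1 / 2 ≤ sem (psi p π π') ρ T) ∧
    (0 ∈ VW ({0, 1} : Set ℝ) (psi p π π')) ∧
    (0 ∉ {v : ℝ | ∃ (ρ : Var → Trace AP) (T : Set (Trace AP)),
        (∀ u, IsBoolTrace (ρ u)) ∧ T ⊆ {t | IsBoolTrace t} ∧ T.Nonempty ∧
        v = sem (psi p π π') ρ T}) ∧
    {v : ℝ | ∃ (ρ : Var → Trace AP) (T : Set (Trace AP)),
        (∀ u, IsBoolTrace (ρ u)) ∧ T ⊆ {t | IsBoolTrace t} ∧ T.Nonempty ∧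
        v = sem (psi p π π') ρ T} ⊂ VW ({0, 1} : Set ℝ) (psi p π π') := by
  obtain ⟨hpsi', hpsi, hvalues⟩ := stmt_2_general {t | IsBoolTrace t} {0, 1} p π π' hne
  exact ⟨hpsi', fun ρ T _ hT => (hpsi ρ T hT).ge, hvalues⟩

end
end

section
/- For every HyperLTL_prop formula ψ whose free variables are among π₁,…,πₖ, every weighted Kripke structure K with weight set W, and every subset P ⊆ [0,1], there exists a nondeterministic Büchi automaton A over the alphabet W^{AP_{≤k}} whose accepted language is exactly the set of encoded traces t_Π for trace assignments Π = [π₁↦t₁,…,πₖ↦tₖ] such that t₁,…,tₖ ∈ 𝕋(K) and ⟦ψ⟧_Π^{𝕋(K)} ∈ P. -/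
open Set

noncomputable section

variable {AP Var : Type} {S : PropSig}

/-- The variables occurring in a quantifier-free formula. -/
def varsQF : PropQF AP Var S → Set Var
  | .tt => ∅
  | .ff => ∅
  | .atom _ π => {π}
  | .app _ args => ⋃ i, varsQF (args i)
  | .next φ => varsQF φ
  | .untl φ₁ φ₂ => varsQF φ₁ ∪ varsQF φ₂

/-- The free variables of a formula. -/
def freeVars : PropForm AP Var S → Set Var
  | .qf φ => varsQF φ
  | .ex π ψ => freeVars ψ \ {π}
  | .all π ψ => freeVars ψ \ {π}

/-- A weighted Kripke structure over `AP`: a finite state set, a finite weight set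
`W ⊆ [0,1]`, initial states, a total transition relation, and a weighted labeling. -/
structure Kripke (AP : Type) where
  S : Type
  [finS : Fintype S]
  W : Set ℝ
  Wfin : W.Finite
  Wsub : W ⊆ Set.Icc (0:ℝ) 1
  init : Set S
  tr : S → S → Prop
  total : ∀ s, ∃ s', tr s s'
  L : S → AP → unitInterval
  L_mem : ∀ s p, ((L s p : ℝ)) ∈ W

/-- The set `𝕋(K)` of traces of a Kripke structure. -/
def Kripke.Traces {AP : Type} (K : Kripke AP) : Set (Trace AP) :=
  {t | ∃ s : ℕ → K.S, s 0 ∈ K.init ∧ (∀ i, K.tr (s i) (s (i + 1))) ∧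
        ∀ i p, t i p = K.L (s i) p}

/-- A nondeterministic Büchi automaton over the alphabet `Alph`. -/
structure NBA (Alph : Type) where
  Q : Type
  [finQ : Fintype Q]
  init : Set Q
  δ : Q → Alph → Set Q
  acc : Set Q

/-- Büchi acceptance: some run visits the accepting set infinitely often. -/
def NBA.Accepts {Alph : Type} (A : NBA Alph) (w : ℕ → Alph) : Prop :=
  ∃ r : ℕ → A.Q, r 0 ∈ A.init ∧ (∀ i, r (i + 1) ∈ A.δ (r i) (w i)) ∧
    ∀ N, ∃ n, N ≤ n ∧ r n ∈ A.acc

/-- The encoding `t_Π` of a trace assignment `[π₁ ↦ t₁, …, π_k ↦ t_k]` as a single trace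
over the atomic propositions `AP_{≤k}`, identified with `AP × Fin k`. -/
def encode {AP : Type} {k : ℕ} (ts : Fin k → Trace AP) : Trace (AP × Fin k) :=
  fun n q => ts q.2 n q.1

/-!
The value of a formula takes the same value on any two words that can be cut into nonempty blocks
with pairwise equal values in a suitable finite monoid, so it is recognizable in the sense of the
theory of `ω`-regular languages. For the temporal operators and for the quantifiers over paths of a
finite graph, that monoid is the transition monoid of an action reading words from right to left:
an until only has to know which values the suffixes of the current block have, and a quantifier
which values the combined words of the current block with the paths from one state to another have.
Blockwise choices of paths with matching ends are then glued into an infinite path. No threshold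
enters the monoid of an until, so one monoid serves all the level sets of the quantitative operator.

By Ramsey's theorem, every word is a block of some value `s` followed by infinitely many blocks of
the same value `e`. A recognizable function is determined by such a pair, and a Büchi automaton can
guess the pair and check the factorization.
-/

section SegProd

variable {α M : Type*} [Monoid M]

/-- The suffix of the infinite word `w` that starts at position `i`. -/
def wordSuffix (w : ℕ → α) (i : ℕ) : ℕ → α := fun n => w (n + i)

/-- The value in the monoid `M` of the factor `w i ⋯ w (j - 1)` of the infinite word `w`, where the
letter map `μ` is extended to a monoid morphism on finite words. It is `1` if `j ≤ i`. -/
def segProd (μ : α → M) (w : ℕ → α) (i j : ℕ) : M :=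
  ((List.Ico i j).map fun n => μ (w n)).prod

variable {μ : α → M} {w w' : ℕ → α} {i j l : ℕ}

theorem segProd_of_le (h : j ≤ i) : segProd μ w i j = 1 := by
  simp [segProd, List.Ico.eq_nil_of_le h]

theorem segProd_self : segProd μ w i i = 1 :=
  segProd_of_le le_rfl

theorem segProd_eq_mul (h : i < j) : segProd μ w i j = μ (w i) * segProd μ w (i + 1) j := by
  simp [segProd, List.Ico.eq_cons h]

theorem segProd_mul_segProd (hij : i ≤ j) (hjl : j ≤ l) :
    segProd μ w i j * segProd μ w j l = segProd μ w i l := by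
  simp [segProd, ← List.Ico.append_consecutive hij hjl]

theorem segProd_wordSuffix (μ : α → M) (w : ℕ → α) (i j l : ℕ) :
    segProd μ (wordSuffix w i) j l = segProd μ w (j + i) (l + i) := by
  rw [segProd, segProd, ← List.Ico.map_add, List.map_map]
  simp only [Function.comp_def, wordSuffix, add_comm]

theorem segProd_congr (h : ∀ n ∈ Ico i j, w n = w' n) : segProd μ w i j = segProd μ w' i j :=
  congrArg List.prod (List.map_congr_left fun n hn => by rw [h n (List.Ico.mem.1 hn)])

theorem segProd_apply {ι : Type*} {N : ι → Type*} [∀ x, Monoid (N x)] (μ : ∀ x, α → N x)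
    (w : ℕ → α) (i j : ℕ) (x : ι) :
    segProd (fun c x => μ x c) w i j x = segProd (μ x) w i j := by
  simp [segProd, Pi.list_prod_apply, Function.comp_def]

/-- An action of `M` reads words from right to left: `q` is the backward run from `q j`. -/
theorem segProd_smul {Q : Type*} [MulAction M Q] {q : ℕ → Q} (hij : i ≤ j)
    (hq : ∀ n ∈ Ico i j, μ (w n) • q (n + 1) = q n) : segProd μ w i j • q j = q i := by
  induction hij using Nat.decreasingInduction with
  | self => rw [segProd_self, one_smul]
  | of_succ i hij ih =>
    rw [segProd_eq_mul hij, mul_smul, ih fun n hn => hq n ⟨(Nat.le_succ i).trans hn.1, hn.2⟩,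
      hq i ⟨le_rfl, hij⟩]

end SegProd

theorem exists_mem_Ico_succ_of_strictMono {a : ℕ → ℕ} (ha : StrictMono a) (h0 : a 0 = 0) (i : ℕ) :
    ∃ k, i ∈ Ico (a k) (a (k + 1)) := by
  have hcover := iUnion_Ico_map_succ_eq_Ici (fun k => ha.monotone (Nat.zero_le k))
    (not_bddAbove_iff.2 fun x => ⟨a (x + 1), mem_range_self _, ha.le_apply⟩)
  exact mem_iUnion.1 (hcover.ge (by simp [h0]))

theorem exists_eqOn_Ico_succ_of_strictMono {β : Type*} {a : ℕ → ℕ} (ha : StrictMono a)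
    (h0 : a 0 = 0) (s : ℕ → ℕ → β) :
    ∃ r : ℕ → β, ∀ k, EqOn r (s k) (Ico (a k) (a (k + 1))) := by
  choose κ hκ using exists_mem_Ico_succ_of_strictMono ha h0
  refine ⟨fun i => s (κ i) i, fun k i hi => ?_⟩
  have hle : κ i < k + 1 := ha.lt_iff_lt.1 ((hκ i).1.trans_lt hi.2)
  have hge : k < κ i + 1 := ha.lt_iff_lt.1 (hi.1.trans_lt (hκ i).2)
  obtain rfl : κ i = k := by omega
  rfl

theorem exists_eqOn_Icc_succ_of_strictMono {β : Type*} {a : ℕ → ℕ} (ha : StrictMono a)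
    (h0 : a 0 = 0) {s : ℕ → ℕ → β}
    (hs : ∀ k, s k (a (k + 1)) = s (k + 1) (a (k + 1))) :
    ∃ r : ℕ → β, ∀ k, EqOn r (s k) (Icc (a k) (a (k + 1))) := by
  obtain ⟨r, hr⟩ := exists_eqOn_Ico_succ_of_strictMono ha h0 s
  refine ⟨r, fun k i hi => ?_⟩
  rcases hi.2.lt_or_eq with hlt | rfl
  · exact hr k ⟨hi.1, hlt⟩
  · rw [hs, hr (k + 1) ⟨le_rfl, ha (k + 1).lt_succ_self⟩]

theorem strictMono_update_zero_zero {b : ℕ → ℕ} (hb : StrictMono b) :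
    StrictMono (Function.update b 0 0) := by
  refine strictMono_nat_of_lt_succ fun n => ?_
  have hlt := hb n.lt_succ_self
  cases n with
  | zero => simpa using hlt.pos
  | succ n => simpa using hlt

/-- The cut points `a` and `a'` split the infinite words `w` and `w'` into nonempty blocks, the
corresponding blocks having the same value in the monoid `M`. -/
structure BlockEquiv {α M : Type*} [Monoid M] (μ : α → M) (w w' : ℕ → α) (a a' : ℕ → ℕ) :
    Prop where
  strictMono_left : StrictMono a
  strictMono_right : StrictMono a'
  zero_left : a 0 = 0
  zero_right : a' 0 = 0
  segProd_eq : ∀ k, segProd μ w (a k) (a (k + 1)) = segProd μ w' (a' k) (a' (k + 1))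

namespace BlockEquiv

variable {α M : Type*} [Monoid M] {μ : α → M} {w w' : ℕ → α} {a a' : ℕ → ℕ}

theorem symm (h : BlockEquiv μ w w' a a') : BlockEquiv μ w' w a' a :=
  ⟨h.strictMono_right, h.strictMono_left, h.zero_right, h.zero_left, fun k => (h.segProd_eq k).symm⟩

theorem segProd_zero_eq (h : BlockEquiv μ w w' a a') (k : ℕ) :
    segProd μ w 0 (a k) = segProd μ w' 0 (a' k) := by
  induction k with
  | zero => rw [h.zero_left, h.zero_right, segProd_self, segProd_self]
  | succ k ih =>
    rw [← segProd_mul_segProd (Nat.zero_le _) (h.strictMono_left.monotone k.le_succ), ih,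
      h.segProd_eq, segProd_mul_segProd (Nat.zero_le _) (h.strictMono_right.monotone k.le_succ)]

theorem exists_wordSuffix (h : BlockEquiv μ w w' a a') {k i i' : ℕ} (hi : i < a k) (hi' : i' < a' k)
    (heq : segProd μ w i (a k) = segProd μ w' i' (a' k)) :
    ∃ b b', BlockEquiv μ (wordSuffix w i) (wordSuffix w' i') b b' := by
  have hlt : ∀ {c : ℕ → ℕ} {x : ℕ}, StrictMono c → x < c k → ∀ n, x < c (k + n) :=
    fun hc hx n => hx.trans_le (hc.monotone (Nat.le_add_right k n))
  have hmono : ∀ {c : ℕ → ℕ} {x : ℕ}, StrictMono c → x < c k →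
      StrictMono fun n => c (k + n) - x := fun hc hx m n hmn =>
    Nat.sub_lt_sub_right (hlt hc hx m).le (hc (Nat.add_lt_add_left hmn k))
  refine ⟨_, _, strictMono_update_zero_zero (hmono h.strictMono_left hi),
    strictMono_update_zero_zero (hmono h.strictMono_right hi'), by simp, by simp, fun n => ?_⟩
  have ha : ∀ n, a (k + n) - i + i = a (k + n) := fun n =>
    Nat.sub_add_cancel (hlt h.strictMono_left hi n).le
  have ha' : ∀ n, a' (k + n) - i' + i' = a' (k + n) := fun n =>
    Nat.sub_add_cancel (hlt h.strictMono_right hi' n).le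
  cases n with
  | zero =>
    simp only [segProd_wordSuffix, Function.update_self, zero_add, ne_eq, one_ne_zero,
      not_false_eq_true, Function.update_of_ne, ha, ha']
    rw [← segProd_mul_segProd hi.le (h.strictMono_left.monotone k.le_succ), heq, h.segProd_eq,
      segProd_mul_segProd hi'.le (h.strictMono_right.monotone k.le_succ)]
  | succ n =>
    simp only [segProd_wordSuffix, ne_eq, Nat.add_eq_zero_iff, one_ne_zero, and_false,
      not_false_eq_true, Function.update_of_ne, ha, ha']
    exact h.segProd_eq (k + n + 1)

end BlockEquiv

/-- The letter map `μ` into the monoid `M` recognizes a function on infinite words if the function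
takes the same value on any two words that split into nonempty blocks with equal values in `M`. -/
def Recognizes {α M X : Type*} [Monoid M] (μ : α → M) (f : (ℕ → α) → X) : Prop :=
  ∀ ⦃w w' a a'⦄, BlockEquiv μ w w' a a' → f w = f w'

/-- A function on infinite words is recognizable if a map into some finite monoid recognizes it;
the recognizable predicates are the `ω`-regular languages. -/
def Recognizable {α X : Type*} (f : (ℕ → α) → X) : Prop :=
  ∃ (M : Type) (_ : Monoid M) (_ : Finite M) (μ : α → M), Recognizes μ f

theorem Recognizes.comp {α M X Y : Type*} [Monoid M] {μ : α → M} {f : (ℕ → α) → X}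
    (hf : Recognizes μ f) (g : X → Y) : Recognizes μ fun w => g (f w) :=
  fun _ _ _ _ h => congrArg g (hf h)

theorem Recognizes.wordSuffix_eq {α M X : Type*} [Monoid M] {μ : α → M} {f : (ℕ → α) → X}
    (hf : Recognizes μ f) {w w' : ℕ → α} {a a' : ℕ → ℕ} (h : BlockEquiv μ w w' a a') {k i i' : ℕ}
    (hi : i < a k) (hi' : i' < a' k) (heq : segProd μ w i (a k) = segProd μ w' i' (a' k)) :
    f (wordSuffix w i) = f (wordSuffix w' i') := by
  obtain ⟨b, b', hb⟩ := h.exists_wordSuffix hi hi' heq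
  exact hf hb

namespace Recognizable

variable {α X Y : Type*}

theorem of_function_end {Q : Type} [Finite Q] {f : (ℕ → α) → X} {μ : α → Function.End Q}
    (h : Recognizes μ f) : Recognizable f :=
  ⟨Function.End Q, inferInstance, inferInstanceAs (Finite (Q → Q)), μ, h⟩

theorem comp {f : (ℕ → α) → X} (hf : Recognizable f) (g : X → Y) :
    Recognizable fun w => g (f w) := by
  obtain ⟨M, _, _, μ, hμ⟩ := hf
  exact ⟨M, _, ‹_›, μ, hμ.comp g⟩

theorem pi {ι : Type} [Finite ι] {f : ι → (ℕ → α) → X} (hf : ∀ i, Recognizable (f i)) :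
    Recognizable fun w i => f i w := by
  choose M _ _ μ hμ using hf
  refine ⟨∀ i, M i, inferInstance, inferInstance, fun c i => μ i c, fun w w' a a' h => ?_⟩
  refine funext fun i => hμ i { h with segProd_eq := fun k => ?_ }
  simpa only [segProd_apply] using congrFun (h.segProd_eq k) i

theorem prodMk {f g : (ℕ → α) → X} (hf : Recognizable f) (hg : Recognizable g) :
    Recognizable fun w => (f w, g w) :=
  (pi (f := fun b : Bool => bif b then f else g) (Bool.forall_bool.2 ⟨hg, hf⟩)).comp
    fun v => (v true, v false)

theorem apply_zero {C : Type} [Finite C] (c : α → C) : Recognizable fun w => c (w 0) := by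
  let μ : α → Function.End C := fun x _ => c x
  refine of_function_end (μ := μ) fun w w' a a' h => ?_
  have hpos : ∀ {b : ℕ → ℕ}, StrictMono b → b 0 < b (0 + 1) := fun hb => hb Nat.zero_lt_one
  have hseg := h.segProd_eq 0
  rw [segProd_eq_mul (hpos h.strictMono_left), segProd_eq_mul (hpos h.strictMono_right),
    h.zero_left, h.zero_right] at hseg
  exact congrFun hseg (c (w 0))

theorem const (x : X) : Recognizable fun _ : ℕ → α => x :=
  (apply_zero fun _ => ()).comp fun _ => x

end Recognizable

section Temporal

variable {α M : Type*} [Monoid M] {μ : α → M} {w : ℕ → α} {i j : ℕ}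

/-- The action of letters on pairs `(m, m')` of values in `M`, read from right to left: `m` is the
value of the word read so far and `m'` that of the word without its first letter. -/
def tailAct (μ : α → M) (x : α) : Function.End (M × M) := fun s => (μ x * s.1, s.1)

theorem segProd_tailAct_smul (h : i ≤ j) :
    segProd (tailAct μ) w i j • ((1, 1) : M × M) = (segProd μ w i j, segProd μ w (i + 1) j) := by
  have hrun := segProd_smul (μ := tailAct μ) (w := w)
    (q := fun n => (segProd μ w n j, segProd μ w (n + 1) j)) h fun n hn =>
      congrArg (·, segProd μ w (n + 1) j) (segProd_eq_mul hn.2).symm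
  rwa [segProd_self, segProd_of_le j.le_succ] at hrun

theorem Recognizable.wordSuffix_one {X : Type*} {f : (ℕ → α) → X} (hf : Recognizable f) :
    Recognizable fun w => f (wordSuffix w 1) := by
  obtain ⟨M, _, _, μ, hμ⟩ := hf
  refine of_function_end (μ := tailAct μ) fun w w' a a' h => ?_
  have hpair : ∀ k, (segProd μ w (a k) (a (k + 1)), segProd μ w (a k + 1) (a (k + 1))) =
      (segProd μ w' (a' k) (a' (k + 1)), segProd μ w' (a' k + 1) (a' (k + 1))) := fun k => by
    rw [← segProd_tailAct_smul (h.strictMono_left k.lt_succ_self).le, h.segProd_eq,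
      segProd_tailAct_smul (h.strictMono_right k.lt_succ_self).le]
  have hμeq : BlockEquiv μ w w' a a' :=
    { h with segProd_eq := fun k => congrArg Prod.fst (hpair k) }
  have htail : segProd μ w 1 (a 1) = segProd μ w' 1 (a' 1) := by
    simpa only [h.zero_left, h.zero_right] using congrArg Prod.snd (hpair 0)
  refine hμ.wordSuffix_eq hμeq (h.strictMono_left.le_apply (x := 2))
    (h.strictMono_right.le_apply (x := 2)) ?_
  rw [← segProd_mul_segProd (h.strictMono_left.le_apply (x := 1))
      (h.strictMono_left (Nat.lt_succ_self 1)).le, htail, hμeq.segProd_eq,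
    segProd_mul_segProd (h.strictMono_right.le_apply (x := 1))
      (h.strictMono_right (Nat.lt_succ_self 1)).le]

/-- The action of letters, read from right to left, that evaluates an until. In a state
`(A, B, m, b)` the sets `A` and `B` of values of suffixes are the ones at which the left and the
right argument of the until hold, `m` is the value of the word read so far, and `b` tells whether
the until is fulfilled inside that word. -/
def untilAct (μ : α → M) (x : α) : Function.End (Set M × Set M × M × Prop) :=
  fun ⟨A, B, m, b⟩ => (A, B, μ x * m, μ x * m ∈ B ∨ μ x * m ∈ A ∧ b)

theorem exists_mem_Ico_and_forall_iff {p q : ℕ → Prop} (h : i < j) :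
    (∃ l ∈ Ico i j, q l ∧ ∀ n ∈ Ico i l, p n) ↔
      q i ∨ p i ∧ ∃ l ∈ Ico (i + 1) j, q l ∧ ∀ n ∈ Ico (i + 1) l, p n := by
  constructor
  · rintro ⟨l, hl, hql, hp⟩
    rcases hl.1.eq_or_lt with rfl | hil
    · exact Or.inl hql
    · exact Or.inr ⟨hp i ⟨le_rfl, hil⟩, l, ⟨hil, hl.2⟩, hql,
        fun n hn => hp n ⟨(Nat.le_succ i).trans hn.1, hn.2⟩⟩
  · rintro (hq | ⟨hp, l, hl, hql, hpl⟩)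
    · exact ⟨i, ⟨le_rfl, h⟩, hq, fun n hn => absurd hn.2 hn.1.not_gt⟩
    · refine ⟨l, ⟨(Nat.le_succ i).trans hl.1, hl.2⟩, hql, fun n hn => ?_⟩
      rcases hn.1.eq_or_lt with rfl | hin
      · exact hp
      · exact hpl n ⟨hin, hn.2⟩

theorem segProd_untilAct_smul (A B : Set M) (h : i ≤ j) :
    segProd (untilAct μ) w i j • (A, B, (1 : M), False) = (A, B, segProd μ w i j,
      ∃ l ∈ Ico i j, segProd μ w l j ∈ B ∧ ∀ n ∈ Ico i l, segProd μ w n j ∈ A) := by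
  have hrun := segProd_smul (μ := untilAct μ) (w := w) (q := fun i => (A, B, segProd μ w i j,
    ∃ l ∈ Ico i j, segProd μ w l j ∈ B ∧ ∀ n ∈ Ico i l, segProd μ w n j ∈ A)) h fun i hi => by
      rw [exists_mem_Ico_and_forall_iff hi.2, segProd_eq_mul hi.2]
      rfl
  simpa [segProd_self] using hrun

theorem BlockEquiv.of_untilAct {w w' : ℕ → α} {a a' : ℕ → ℕ}
    (h : BlockEquiv (untilAct μ) w w' a a') : BlockEquiv μ w w' a a' := by
  refine { h with segProd_eq := fun k => ?_ }
  have hseg := congrArg (· • ((∅, ∅, 1, False) : Set M × Set M × M × Prop)) (h.segProd_eq k)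
  simp only [segProd_untilAct_smul _ _ (h.strictMono_left k.lt_succ_self).le,
    segProd_untilAct_smul _ _ (h.strictMono_right k.lt_succ_self).le] at hseg
  exact congrArg (fun s => s.2.2.1) hseg

theorem Recognizes.until {p q : (ℕ → α) → Prop} (hp : Recognizes μ p) (hq : Recognizes μ q) :
    Recognizes (untilAct μ) fun w => ∃ i, q (wordSuffix w i) ∧ ∀ j < i, p (wordSuffix w j) := by
  suffices himp : ∀ {w w' a a'}, BlockEquiv (untilAct μ) w w' a a' →
      (∃ i, q (wordSuffix w i) ∧ ∀ j < i, p (wordSuffix w j)) →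
      ∃ i, q (wordSuffix w' i) ∧ ∀ j < i, p (wordSuffix w' j) from
    fun w w' a a' h => propext ⟨himp h, himp h.symm⟩
  rintro w w' a a' h ⟨i, hi, hlt⟩
  obtain ⟨k, hik⟩ : ∃ k, i < a k := ⟨i + 1, h.strictMono_left.le_apply⟩
  let types (r : (ℕ → α) → Prop) : Set M :=
    {m | ∃ n < a k, segProd μ w n (a k) = m ∧ r (wordSuffix w n)}
  have htransfer : ∀ {r : (ℕ → α) → Prop}, Recognizes μ r → ∀ n' < a' k,
      segProd μ w' n' (a' k) ∈ types r → r (wordSuffix w' n') := by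
    rintro r hr n' hn' ⟨n, hn, heq, hrn⟩
    rwa [← hr.wordSuffix_eq h.of_untilAct hn hn' heq]
  have huntil := congrArg (· • (types p, types q, (1 : M), False)) (h.segProd_zero_eq k)
  simp only [segProd_untilAct_smul _ _ (Nat.zero_le _)] at huntil
  obtain ⟨i', hi', hqi', hpi'⟩ := (congrArg (fun s => s.2.2.2) huntil).mp
    ⟨i, ⟨Nat.zero_le _, hik⟩, ⟨i, hik, rfl, hi⟩,
      fun n hn => ⟨n, hn.2.trans hik, rfl, hlt n hn.2⟩⟩
  exact ⟨i', htransfer hq i' hi'.2 hqi',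
    fun n hn => htransfer hp n (hn.trans hi'.2) (hpi' n ⟨Nat.zero_le _, hn⟩)⟩

theorem le_prefMin_iff {g : ℕ → ℝ} {c : ℝ} {n : ℕ} :
    c ≤ prefMin g n ↔ c ≤ 1 ∧ ∀ m < n, c ≤ g m := by
  induction n with
  | zero => simp [prefMin]
  | succ n ih => rw [prefMin, le_min_iff, ih, Nat.forall_lt_succ_right, and_assoc]

theorem Recognizable.iSup_until {f₁ f₂ : (ℕ → α) → ℝ} (hf₁ : Recognizable f₁)
    (hf₂ : Recognizable f₂) : Recognizable fun w =>
      ⨆ i, min (f₂ (wordSuffix w i)) (prefMin (fun j => f₁ (wordSuffix w j)) i) := by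
  obtain ⟨M, _, _, μ, hμ⟩ := hf₁.prodMk hf₂
  have hlevel : ∀ c, Recognizes (untilAct μ) fun w =>
      ∃ i, c ≤ f₂ (wordSuffix w i) ∧ ∀ j < i, c ≤ f₁ (wordSuffix w j) := fun c =>
    (hμ.comp (c ≤ ·.1)).until (hμ.comp (c ≤ ·.2))
  suffices hle : ∀ {w w' a a'}, BlockEquiv (untilAct μ) w w' a a' →
      ∀ i, ∃ i', min (f₂ (wordSuffix w i)) (prefMin (fun j => f₁ (wordSuffix w j)) i) ≤
        min (f₂ (wordSuffix w' i')) (prefMin (fun j => f₁ (wordSuffix w' j)) i') from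
    of_function_end (μ := untilAct μ) fun w w' a a' h =>
      csSup_eq_csSup_of_forall_exists_le
        (forall_mem_range.2 fun i => exists_range_iff.2 (hle h i))
        (forall_mem_range.2 fun i => exists_range_iff.2 (hle h.symm i))
  intro w w' a a' h i
  obtain ⟨hone, hlt⟩ := le_prefMin_iff.1
    (min_le_right (f₂ (wordSuffix w i)) (prefMin (fun j => f₁ (wordSuffix w j)) i))
  obtain ⟨i', hi', hlt'⟩ := (hlevel _ h).mp ⟨i, min_le_left _ _, hlt⟩
  exact ⟨i', le_min hi' (le_prefMin_iff.2 ⟨hone, hlt'⟩)⟩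

end Temporal

section Path

variable {α β Q M : Type*} [Monoid M]

/-- The infinite paths of the graph `tr` that start in `init`. -/
def IsPath (init : Set Q) (tr : Q → Q → Prop) (s : ℕ → Q) : Prop :=
  s 0 ∈ init ∧ ∀ i, tr (s i) (s (i + 1))

/-- The finite paths of the graph `tr` that run from time `i` to time `j` and end in `t`, each
recorded by its source and by the value of the word that `comb` forms from it and from `w`. -/
def pathValues (tr : Q → Q → Prop) (comb : α → Q → β) (ν : β → M) (w : ℕ → α) (t : Q) (i j : ℕ) :
    Set (Q × M) :=
  {q | ∃ s : ℕ → Q, s i = q.1 ∧ s j = t ∧ (∀ n ∈ Ico i j, tr (s n) (s (n + 1))) ∧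
    segProd ν (fun n => comb (w n) (s n)) i j = q.2}

/-- The action of letters, read from right to left, that computes `pathValues`: it prolongs each
path by one step at its source. -/
def pathAct (tr : Q → Q → Prop) (comb : α → Q → β) (ν : β → M) (x : α) :
    Function.End (Set (Q × M)) :=
  fun R => {q | ∃ s m, tr q.1 s ∧ (s, m) ∈ R ∧ ν (comb x q.1) * m = q.2}

variable {tr : Q → Q → Prop} {comb : α → Q → β} {ν : β → M} {w w' : ℕ → α} {t : Q} {i j : ℕ}

theorem pathValues_self : pathValues tr comb ν w t i i = {(t, 1)} := by
  ext ⟨s, m⟩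
  simp only [pathValues, segProd_self, Ico_self, mem_ofPred_eq, mem_singleton_iff, Prod.mk.injEq]
  constructor
  · rintro ⟨r, rfl, rfl, -, rfl⟩
    exact ⟨rfl, rfl⟩
  · rintro ⟨rfl, rfl⟩
    exact ⟨fun _ => s, rfl, rfl, fun n hn => absurd hn (notMem_empty n), rfl⟩

theorem pathAct_smul_pathValues (h : i < j) :
    pathAct tr comb ν (w i) • pathValues tr comb ν w t (i + 1) j =
      pathValues tr comb ν w t i j := by
  ext ⟨s, m⟩
  constructor
  · rintro ⟨_, _, hstep, ⟨r, rfl, rfl, hr, rfl⟩, hm⟩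
    have hne : ∀ n, i + 1 ≤ n → Function.update r i s n = r n := fun n hn =>
      Function.update_of_ne (Nat.ne_of_gt hn) _ _
    refine ⟨Function.update r i s, Function.update_self .., hne j h, fun n hn => ?_, ?_⟩
    · rw [hne (n + 1) (Nat.succ_le_succ hn.1)]
      rcases hn.1.eq_or_lt with rfl | hin
      · rwa [Function.update_self]
      · rw [hne n hin]
        exact hr n ⟨hin, hn.2⟩
    · rw [segProd_eq_mul h, Function.update_self]
      refine Eq.trans (congrArg _ (segProd_congr fun n hn => ?_)) hm
      simp only [hne n hn.1]
  · rintro ⟨r, rfl, rfl, hr, hm⟩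
    rw [segProd_eq_mul h] at hm
    exact ⟨r (i + 1), _, hr i ⟨le_rfl, h⟩,
      ⟨r, rfl, rfl, fun n hn => hr n ⟨(Nat.le_succ i).trans hn.1, hn.2⟩, rfl⟩, hm⟩

theorem segProd_pathAct_smul (h : i ≤ j) :
    segProd (pathAct tr comb ν) w i j • {(t, (1 : M))} = pathValues tr comb ν w t i j := by
  rw [← pathValues_self (tr := tr) (comb := comb) (w := w) (i := j)]
  exact segProd_smul (q := (pathValues tr comb ν w t · j)) h fun n hn =>
    pathAct_smul_pathValues hn.2

theorem BlockEquiv.pathValues_eq {a a' : ℕ → ℕ} (h : BlockEquiv (pathAct tr comb ν) w w' a a')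
    (t : Q) (k : ℕ) : pathValues tr comb ν w t (a k) (a (k + 1)) =
      pathValues tr comb ν w' t (a' k) (a' (k + 1)) := by
  rw [← segProd_pathAct_smul (h.strictMono_left k.lt_succ_self).le, h.segProd_eq,
    segProd_pathAct_smul (h.strictMono_right k.lt_succ_self).le]

theorem BlockEquiv.exists_isPath {a a' : ℕ → ℕ} (h : BlockEquiv (pathAct tr comb ν) w w' a a')
    {init : Set Q} {s : ℕ → Q} (hs : IsPath init tr s) : ∃ s', IsPath init tr s' ∧
      BlockEquiv ν (fun n => comb (w n) (s n)) (fun n => comb (w' n) (s' n)) a a' := by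
  have hblock : ∀ k, (s (a k), segProd ν (fun n => comb (w n) (s n)) (a k) (a (k + 1))) ∈
      pathValues tr comb ν w' (s (a (k + 1))) (a' k) (a' (k + 1)) := fun k => by
    rw [← h.pathValues_eq]
    exact ⟨s, rfl, rfl, fun n _ => hs.2 n, rfl⟩
  choose r hsource htarget htr hval using hblock
  obtain ⟨s', hs'⟩ := exists_eqOn_Icc_succ_of_strictMono h.strictMono_right h.zero_right (s := r)
    fun k => (htarget k).trans (hsource (k + 1)).symm
  have hlt : ∀ k, a' k < a' (k + 1) := fun k => h.strictMono_right k.lt_succ_self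
  refine ⟨s', ⟨?_, fun i => ?_⟩, { h with segProd_eq := fun k => ?_ }⟩
  · have hzero := (hs' 0 ⟨le_rfl, (hlt 0).le⟩).trans (hsource 0)
    rw [h.zero_left, h.zero_right] at hzero
    exact hzero ▸ hs.1
  · obtain ⟨k, hk⟩ := exists_mem_Ico_succ_of_strictMono h.strictMono_right h.zero_right i
    rw [hs' k ⟨hk.1, hk.2.le⟩, hs' k ⟨hk.1.trans i.le_succ, hk.2⟩]
    exact htr k i hk
  · refine (hval k).symm.trans ?_
    exact segProd_congr fun n hn => by simp only [hs' k ⟨hn.1, hn.2.le⟩]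

end Path

theorem Recognizable.image_isPath {α β X : Type*} {Q : Type} [Finite Q] {f : (ℕ → β) → X}
    (hf : Recognizable f) (init : Set Q) (tr : Q → Q → Prop) (comb : α → Q → β) :
    Recognizable fun w => (fun s => f fun n => comb (w n) (s n)) '' {s | IsPath init tr s} := by
  obtain ⟨M, _, _, ν, hν⟩ := hf
  suffices hsub : ∀ {w w' a a'}, BlockEquiv (pathAct tr comb ν) w w' a a' →
      (fun s => f fun n => comb (w n) (s n)) '' {s | IsPath init tr s} ⊆
        (fun s => f fun n => comb (w' n) (s n)) '' {s | IsPath init tr s} from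
    of_function_end (μ := pathAct tr comb ν) fun w w' a a' h => (hsub h).antisymm (hsub h.symm)
  rintro w w' a a' h _ ⟨s, hs, rfl⟩
  obtain ⟨s', hs', heq⟩ := h.exists_isPath hs
  exact ⟨s', hs', (hν heq).symm⟩

/-- The trace assignment described by the infinite word `σ`, whose letters assign an element of `B`
to every trace variable, when the elements of `B` are labelled by `lab`. -/
def wordAssignment {B : Type*} (lab : B → AP → unitInterval) (σ : ℕ → Var → B) : Var → Trace AP :=
  fun π n => lab (σ n π)

theorem update_wordAssignment [DecidableEq Var] {B : Type*} (lab : B → AP → unitInterval)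
    (σ : ℕ → Var → B) (π : Var) (s : ℕ → B) :
    Function.update (wordAssignment lab σ) π (fun n => lab (s n)) =
      wordAssignment lab fun n => Function.update (σ n) π (s n) := by
  funext π' n
  rcases eq_or_ne π' π with rfl | hne
  · simp only [wordAssignment, Function.update_self]
  · simp only [wordAssignment, Function.update_of_ne hne]

theorem recognizable_semQF {B : Type} [Finite B] (lab : B → AP → unitInterval)
    (φ : PropQF AP Var S) (T : Set (Trace AP)) :
    Recognizable fun σ : ℕ → Var → B => semQF φ (wordAssignment lab σ) T := by
  induction φ with
  | tt => exact .const 1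
  | ff => exact .const 0
  | atom p π => exact (Recognizable.apply_zero fun x : Var → B => x π).comp fun b => (lab b p : ℝ)
  | app f args ih => exact (Recognizable.pi ih).comp (S.interp f)
  | next φ ih => exact ih.wordSuffix_one
  | untl φ₁ φ₂ ih₁ ih₂ => exact ih₁.iSup_until ih₂

namespace Kripke

attribute [local instance] Kripke.finS

/-- The labelling of the states of `K` together with an extra letter `none`, which stands for the
value of a trace variable to which no path of `K` has been assigned. -/
def partialLabel (K : Kripke AP) (o : Option K.S) : AP → unitInterval := o.elim 0 K.L

theorem traces_eq_image (K : Kripke AP) :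
    K.Traces = (fun s n => K.partialLabel (some (s n))) '' {s | IsPath K.init K.tr s} := by
  ext t
  constructor
  · rintro ⟨s, hinit, htr, ht⟩
    exact ⟨s, ⟨hinit, htr⟩, funext fun n => funext fun p => (ht n p).symm⟩
  · rintro ⟨s, ⟨hinit, htr⟩, rfl⟩
    exact ⟨s, hinit, htr, fun _ _ => rfl⟩

theorem image_update_traces [DecidableEq Var] {X : Type*} (K : Kripke AP)
    (g : (Var → Trace AP) → X) (π : Var) (σ : ℕ → Var → Option K.S) :
    (fun t => g (Function.update (wordAssignment K.partialLabel σ) π t)) '' K.Traces =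
      (fun s => g (wordAssignment K.partialLabel fun n => Function.update (σ n) π (some (s n)))) ''
        {s | IsPath K.init K.tr s} := by
  rw [traces_eq_image, image_image]
  exact image_congr fun s _ =>
    congrArg g (update_wordAssignment K.partialLabel σ π fun n => some (s n))

theorem recognizable_image_update_traces [DecidableEq Var] {X : Type*} (K : Kripke AP)
    {g : (Var → Trace AP) → X}
    (hg : Recognizable fun σ : ℕ → Var → Option K.S => g (wordAssignment K.partialLabel σ))
    (π : Var) : Recognizable fun σ : ℕ → Var → Option K.S =>
      (fun t => g (Function.update (wordAssignment K.partialLabel σ) π t)) '' K.Traces := by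
  simp only [K.image_update_traces g]
  exact hg.image_isPath K.init K.tr fun x s => Function.update x π (some s)

theorem recognizable_sem [DecidableEq Var] (K : Kripke AP) (ψ : PropForm AP Var S) :
    Recognizable fun σ : ℕ → Var → Option K.S =>
      sem ψ (wordAssignment K.partialLabel σ) K.Traces := by
  induction ψ with
  | qf φ => exact recognizable_semQF K.partialLabel φ K.Traces
  | ex π ψ ih =>
    exact (K.recognizable_image_update_traces (g := (sem ψ · K.Traces)) ih π).comp sSup
  | all π ψ ih =>
    exact (K.recognizable_image_update_traces (g := (sem ψ · K.Traces)) ih π).comp sInf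

end Kripke

theorem semQF_congr (φ : PropQF AP Var S) (T : Set (Trace AP)) {ρ ρ' : Var → Trace AP}
    (h : EqOn ρ ρ' (varsQF φ)) : semQF φ ρ T = semQF φ ρ' T := by
  have hshift : ∀ {V : Set Var} {ρ ρ' : Var → Trace AP} (i : ℕ), EqOn ρ ρ' V →
      EqOn (shiftA ρ i) (shiftA ρ' i) V := fun i h _ hπ =>
    congrArg (fun (t : Trace AP) n => t (n + i)) (h hπ)
  induction φ generalizing ρ ρ' with
  | tt => rfl
  | ff => rfl
  | atom p π => simp only [semQF, h (mem_singleton π)]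
  | app f args ih =>
    exact congrArg (S.interp f) (funext fun i =>
      ih i (h.mono (subset_iUnion_of_subset i subset_rfl)))
  | next φ ih => exact ih (hshift 1 h)
  | untl φ₁ φ₂ ih₁ ih₂ =>
    simp only [semQF, fun i => ih₁ (hshift i (h.mono subset_union_left)),
      fun i => ih₂ (hshift i (h.mono subset_union_right))]

theorem sem_congr [DecidableEq Var] (ψ : PropForm AP Var S) (T : Set (Trace AP))
    {ρ ρ' : Var → Trace AP} (h : EqOn ρ ρ' (freeVars ψ)) : sem ψ ρ T = sem ψ ρ' T := by
  have hupdate : ∀ {V : Set Var} {π : Var} {ρ ρ' : Var → Trace AP} (t : Trace AP),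
      EqOn ρ ρ' (V \ {π}) → EqOn (Function.update ρ π t) (Function.update ρ' π t) V :=
    fun {V π ρ ρ'} t h π' hπ' => by
      rcases eq_or_ne π' π with rfl | hne
      · simp only [Function.update_self]
      · simp only [Function.update_of_ne hne, h ⟨hπ', hne⟩]
  induction ψ generalizing ρ ρ' with
  | qf φ => exact semQF_congr φ T h
  | ex π ψ ih => exact congrArg sSup (image_congr fun t _ => ih (hupdate t h))
  | all π ψ ih => exact congrArg sInf (image_congr fun t _ => ih (hupdate t h))

section Factorization

theorem exists_strictMono_forall_lt_eq {κ : Type*} [Finite κ] (c : ℕ → ℕ → κ) :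
    ∃ (e : κ) (b : ℕ → ℕ), StrictMono b ∧ ∀ m n, m < n → c (b m) (b n) = e := by
  have hlim : ∀ g : ℕ → κ, ∃ e, ∀ᶠ n in Filter.hyperfilter ℕ, g n = e := fun g => by
    obtain ⟨e, he⟩ := ((Filter.hyperfilter ℕ).map g).eq_pure_of_finite
    have hmem : {e} ∈ (Filter.hyperfilter ℕ).map g := by
      rw [he]
      exact mem_singleton e
    exact ⟨e, hmem⟩
  choose lim hlimc using fun i => hlim (c i)
  obtain ⟨e, he⟩ := hlim lim
  obtain ⟨b, -, hb⟩ := exists_seq_of_forall_finset_exists (fun i => lim i = e)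
    (fun i j => i < j ∧ c i j = e) fun s hs => (he.and ((Filter.eventually_all_finset s).2
      fun i hi => ((Filter.eventually_gt_atTop i).filter_mono Nat.hyperfilter_le_atTop).and
        ((hlimc i).mono fun j hj => hj.trans (hs i hi)))).exists
  exact ⟨e, b, fun m n hmn => (hb m n hmn).1, fun m n hmn => (hb m n hmn).2⟩

/-- The infinite word `w` splits into a block of value `s` followed by infinitely many blocks of
value `e`. -/
def FactorsAs {α M : Type*} [Monoid M] (μ : α → M) (w : ℕ → α) (s e : M) : Prop :=
  ∃ a : ℕ → ℕ, StrictMono a ∧ a 0 = 0 ∧ segProd μ w (a 0) (a 1) = s ∧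
    ∀ k, segProd μ w (a (k + 1)) (a (k + 2)) = e

variable {α M : Type*} [Monoid M] {μ : α → M}

theorem exists_factorsAs [Finite M] (μ : α → M) (w : ℕ → α) : ∃ s e, FactorsAs μ w s e := by
  obtain ⟨e, b, hb, he⟩ := exists_strictMono_forall_lt_eq (segProd μ w)
  refine ⟨_, e, _, strictMono_update_zero_zero hb, Function.update_self .., rfl, fun k => ?_⟩
  simpa using he (k + 1) (k + 2) (k + 1).lt_succ_self

theorem Recognizes.eq_of_factorsAs {X : Type*} {f : (ℕ → α) → X} (hf : Recognizes μ f)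
    {w w' : ℕ → α} {s e : M} (h : FactorsAs μ w s e) (h' : FactorsAs μ w' s e) : f w = f w' := by
  obtain ⟨a, ha, hzero, hs, he⟩ := h
  obtain ⟨a', ha', hzero', hs', he'⟩ := h'
  refine hf ⟨ha, ha', hzero, hzero', fun k => ?_⟩
  cases k with
  | zero => exact hs.trans hs'.symm
  | succ k => exact (he k).trans (he' k).symm

end Factorization

section FactorNBA

variable {α M : Type} [Monoid M] [Finite M]

/-- The automaton accepting the words that split into a block of value `s` followed by infinitely
many blocks of value `e` for some `s` and `e` related by `G`. In a state `(m, e, b)` the value `m`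
is the one that the rest of the current block is guessed to have, and the flag `b` tells whether a
block has just been completed. -/
def factorNBA (μ : α → M) (G : M → M → Prop) : NBA α where
  Q := M × M × Bool
  finQ := Fintype.ofFinite _
  init := {q | G q.1 q.2.1}
  δ := fun q x => {q' | q'.2.1 = q.2.1 ∧
    ((q'.2.2 = false ∧ μ x * q'.1 = q.1) ∨ (q'.2.2 = true ∧ μ x = q.1 ∧ q'.1 = q'.2.1))}
  acc := {q | q.2.2 = true}

variable {μ : α → M} {G : M → M → Prop} {w : ℕ → α}

theorem factorNBA_accepts_of_factorsAs {s e : M} (h : FactorsAs μ w s e) (hG : G s e) :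
    (factorNBA μ G).Accepts w := by
  obtain ⟨a, ha, hzero, hs, he⟩ := h
  have hlt : ∀ k, a k < a (k + 1) := fun k => ha k.lt_succ_self
  obtain ⟨r, hr⟩ := exists_eqOn_Ico_succ_of_strictMono ha hzero
    fun k i => (segProd μ w i (a (k + 1)), e, decide (i = a k))
  replace hr : ∀ {k i}, i ∈ Ico (a k) (a (k + 1)) →
      r i = (segProd μ w i (a (k + 1)), e, decide (i = a k)) := fun hi => hr _ hi
  have hcut : ∀ k, r (a k) = (segProd μ w (a k) (a (k + 1)), e, true) := fun k => by
    rw [hr ⟨le_rfl, hlt k⟩, decide_eq_true rfl]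
  refine ⟨r, ?_, fun i => ?_, fun N => ⟨a N, ha.le_apply,
    congrArg (fun q : M × M × Bool => q.2.2) (hcut N)⟩⟩
  · have hinit := hcut 0
    rw [hs, hzero] at hinit
    rw [hinit]
    exact hG
  · obtain ⟨k, hk⟩ := exists_mem_Ico_succ_of_strictMono ha hzero i
    rw [hr hk]
    rcases (Nat.succ_le_of_lt hk.2).lt_or_eq with hinside | hend
    · rw [hr ⟨hk.1.trans i.le_succ, hinside⟩]
      exact ⟨rfl, Or.inl ⟨decide_eq_false (Nat.lt_succ_of_le hk.1).ne', (segProd_eq_mul hk.2).symm⟩⟩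
    · have hlast : μ (w i) = segProd μ w i (a (k + 1)) := by
        rw [segProd_eq_mul hk.2, segProd_of_le hend.ge, mul_one]
      rw [show r (i + 1) = _ from (congrArg r hend).trans (hcut (k + 1))]
      exact ⟨rfl, Or.inr ⟨rfl, hlast, he k⟩⟩

theorem segProd_eq_of_factorNBA_run {r : ℕ → M × M × Bool}
    (hr : ∀ i, r (i + 1) ∈ (factorNBA μ G).δ (r i) (w i)) {i j : ℕ} (hij : i < j)
    (hj : (r j).2.2 = true) (hinside : ∀ n ∈ Ioo i j, (r n).2.2 ≠ true) :
    segProd μ w i j = (r i).1 := by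
  have hrun := segProd_smul (μ := μ) (w := w) (q := fun n => if n = j then 1 else (r n).1) hij.le
    fun n hn => by
      rw [if_neg hn.2.ne]
      rcases (hr n).2 with ⟨hflag, hmul⟩ | ⟨hflag, hlast, -⟩
      · rwa [if_neg fun heq => by simp [← heq, hflag] at hj]
      · rw [if_pos (by_contra fun hne =>
          hinside (n + 1) ⟨Nat.lt_succ_of_le hn.1, lt_of_le_of_ne hn.2 hne⟩ hflag), smul_eq_mul,
          mul_one, hlast]
  simpa [hij.ne] using hrun

theorem exists_factorsAs_of_factorNBA_accepts (h : (factorNBA μ G).Accepts w) :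
    ∃ s e, G s e ∧ FactorsAs μ w s e := by
  obtain ⟨r, hG, hδ, hacc⟩ := h
  have hguess : ∀ i, (r i).2.1 = (r 0).2.1 := fun i => by
    induction i with
    | zero => rfl
    | succ i ih => exact (hδ i).1.trans ih
  have hreset : ∀ i, i ≠ 0 → (r i).2.2 = true → (r i).1 = (r 0).2.1 := fun i hi hflag => by
    obtain ⟨i, rfl⟩ := Nat.exists_eq_succ_of_ne_zero hi
    rcases (hδ i).2 with ⟨hflag', -⟩ | ⟨-, -, heq⟩
    · exact absurd (hflag.symm.trans hflag') Bool.noConfusion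
    · exact heq.trans (hguess _)
  let cut (n : ℕ) : Prop := n = 0 ∨ (r n).2.2 = true
  have hcut : {n | cut n}.Infinite := Nat.frequently_atTop_iff_infinite.1
    (Filter.frequently_atTop.2 fun N => (hacc N).imp fun n hn => ⟨hn.1, Or.inr hn.2⟩)
  have ha : StrictMono (Nat.nth cut) := Nat.nth_strictMono hcut
  have hzero : Nat.nth cut 0 = 0 := Nat.nth_zero_of_zero (Or.inl rfl)
  have hpos : ∀ k, Nat.nth cut (k + 1) ≠ 0 := fun k =>
    ((Nat.zero_le _).trans_lt (ha k.succ_pos)).ne'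
  have hflag : ∀ k, (r (Nat.nth cut (k + 1))).2.2 = true := fun k =>
    (Nat.nth_mem_of_infinite hcut (k + 1)).resolve_left (hpos k)
  have hblock : ∀ k, segProd μ w (Nat.nth cut k) (Nat.nth cut (k + 1)) =
      (r (Nat.nth cut k)).1 := fun k =>
    segProd_eq_of_factorNBA_run hδ (ha k.lt_succ_self) (hflag k) fun n hn hn' =>
      hn.1.not_ge (Nat.le_nth_of_lt_nth_succ hn.2 (Or.inr hn'))
  refine ⟨(r 0).1, (r 0).2.1, hG, Nat.nth cut, ha, hzero, ?_, fun k => ?_⟩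
  · rw [hblock, hzero]
  · rw [hblock, hreset _ (hpos k) (hflag k)]

end FactorNBA

theorem Recognizable.exists_nba {α : Type} {X : Type*} {f : (ℕ → α) → X} (hf : Recognizable f)
    (P : Set X) : ∃ B : NBA α, ∀ w, B.Accepts w ↔ f w ∈ P := by
  obtain ⟨M, _, _, μ, hμ⟩ := hf
  refine ⟨factorNBA μ fun s e => ∃ w, FactorsAs μ w s e ∧ f w ∈ P, fun w => ⟨fun h => ?_, ?_⟩⟩
  · obtain ⟨s, e, ⟨w', hw', hP⟩, hw⟩ := exists_factorsAs_of_factorNBA_accepts h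
    rwa [hμ.eq_of_factorsAs hw hw']
  · intro hP
    obtain ⟨s, e, hw⟩ := exists_factorsAs μ w
    exact factorNBA_accepts_of_factorsAs hw ⟨w, hw, hP⟩

namespace NBA

attribute [local instance] NBA.finQ

/-- The automaton that guesses a path of the graph `tr` starting in `init`, checks that the letters
`out` along this path form the input, and runs `B` on the letters `inp` along the path. -/
def guessPath {α γ Q : Type} [Finite Q] (B : NBA α) (init : Set Q) (tr : Q → Q → Prop)
    (inp : Q → α) (out : Q → γ) : NBA γ where
  Q := B.Q × Q
  finQ := Fintype.ofFinite _
  init := {q | q.1 ∈ B.init ∧ q.2 ∈ init}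
  δ := fun q x => {q' | q'.1 ∈ B.δ q.1 (inp q.2) ∧ tr q.2 q'.2 ∧ x = out q.2}
  acc := {q | q.1 ∈ B.acc}

theorem guessPath_accepts_iff {α γ Q : Type} [Finite Q] (B : NBA α) (init : Set Q)
    (tr : Q → Q → Prop) (inp : Q → α) (out : Q → γ) (w : ℕ → γ) :
    (B.guessPath init tr inp out).Accepts w ↔
      ∃ v, IsPath init tr v ∧ (w = fun n => out (v n)) ∧ B.Accepts fun n => inp (v n) := by
  constructor
  · rintro ⟨r, ⟨hB, hinit⟩, hδ, hacc⟩
    exact ⟨fun n => (r n).2, ⟨hinit, fun n => (hδ n).2.1⟩, funext fun n => (hδ n).2.2,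
      fun n => (r n).1, hB, fun n => (hδ n).1, hacc⟩
  · rintro ⟨v, ⟨hinit, htr⟩, rfl, r, hB, hδ, hacc⟩
    exact ⟨fun n => (r n, v n), ⟨hB, hinit⟩, fun n => ⟨hδ n, htr n, rfl⟩, hacc⟩

end NBA

theorem Kripke.forall_mem_traces_iff {ι : Type*} (K : Kripke AP) {ts : ι → Trace AP} :
    (∀ i, ts i ∈ K.Traces) ↔ ∃ v : ℕ → ι → K.S,
      IsPath {s | ∀ i, s i ∈ K.init} (fun s s' => ∀ i, K.tr (s i) (s' i)) v ∧
        ts = fun i n => K.L (v n i) := by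
  constructor
  · intro hts
    choose s hinit htr hlabel using hts
    exact ⟨fun n i => s i n, ⟨hinit, fun n i => htr i n⟩,
      funext fun i => funext fun n => funext (hlabel i n)⟩
  · rintro ⟨v, ⟨hinit, htr⟩, rfl⟩ i
    exact ⟨fun n => v n i, hinit i, fun n => htr n i, fun _ _ => rfl⟩

/-- The letter assigning the state `s i` to the trace variable `vs i` for every `i`, and `none` to
every other trace variable. -/
def assignmentLetter {ι Q : Type*} (vs : ι → Var) (s : ι → Q) : Var → Option Q :=
  Function.extend vs (fun i => some (s i)) fun _ => none

theorem Kripke.wordAssignment_assignmentLetter {ι : Type*} (K : Kripke AP) {vs : ι → Var}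
    (hinj : Function.Injective vs) (v : ℕ → ι → K.S) (i : ι) :
    wordAssignment K.partialLabel (fun n => assignmentLetter vs (v n)) (vs i) =
      fun n => K.L (v n i) := by
  funext n
  rw [wordAssignment, assignmentLetter, hinj.extend_apply]
  rfl

/-- For every HyperLTL_prop formula `ψ` with free variables among
`π₁, …, π_k`, every weighted Kripke structure `K` and every `P ⊆ [0,1]`, there is an NBA
over the alphabet `W^{AP_{≤k}}` accepting exactly the encoded traces `t_Π` of assignments
`Π` of the variables to traces of `K` such that `⟦ψ⟧_Π^{𝕋(K)} ∈ P`. -/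
theorem stmt_3 {AP Var : Type} [DecidableEq Var] {S : PropSig}
    (k : ℕ) (vs : Fin k → Var) (hinj : Function.Injective vs)
    (ψ : PropForm AP Var S) (hfree : freeVars ψ ⊆ Set.range vs)
    (K : Kripke AP) (P : Set ℝ) :
    ∃ A : NBA ((AP × Fin k) → unitInterval),
      ∀ w : ℕ → ((AP × Fin k) → unitInterval),
        A.Accepts w ↔
          ∃ ts : Fin k → Trace AP,
            (∀ i, ts i ∈ K.Traces) ∧ w = encode ts ∧
            ∀ ρ : Var → Trace AP, (∀ i, ρ (vs i) = ts i) → sem ψ ρ K.Traces ∈ P := by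
  have := K.finS
  obtain ⟨B, hB⟩ := (K.recognizable_sem ψ).exists_nba P
  have hsem : ∀ {v : ℕ → Fin k → K.S} {ρ : Var → Trace AP},
      (∀ i, ρ (vs i) = fun n => K.L (v n i)) → sem ψ ρ K.Traces =
        sem ψ (wordAssignment K.partialLabel fun n => assignmentLetter vs (v n)) K.Traces :=
    fun hρ => sem_congr ψ K.Traces fun π hπ => by
      obtain ⟨i, rfl⟩ := hfree hπ
      rw [hρ, K.wordAssignment_assignmentLetter hinj]
  refine ⟨B.guessPath {s : Fin k → K.S | ∀ i, s i ∈ K.init} (fun s s' => ∀ i, K.tr (s i) (s' i))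
    (assignmentLetter vs) fun s q => K.L (s q.2) q.1, fun w => ?_⟩
  simp only [NBA.guessPath_accepts_iff, K.forall_mem_traces_iff, hB]
  constructor
  · rintro ⟨v, hv, rfl, hP⟩
    exact ⟨_, ⟨v, hv, rfl⟩, rfl, fun ρ hρ => by rwa [hsem hρ]⟩
  · rintro ⟨_, ⟨v, hv, rfl⟩, rfl, hP⟩
    exact ⟨v, hv, rfl, hP _ (K.wordAssignment_assignmentLetter hinj v)⟩

end
end

section
/- For every formula ψ of the positive Boolean closure B⁺(HyperLTL), there exists a formula ψ* in prenex form (a sequence of quantifiers followed by a quantifier-free formula) that is semantically equivalent to ψ (i.e. ⟦ψ⟧_Π^T = ⟦ψ*⟧_Π^T for all trace assignments Π and nonempty sets T of Boolean traces), contains the same number of existential quantifiers and the same number of universal quantifiers as ψ, and has alternation depth α(ψ*) ≤ α(ψ) + 1. -/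
open Set

noncomputable section

/-- Quantifier-free LTL formulas (over trace variables). -/
inductive LTLQF (AP Var : Type) : Type where
  | atom : AP → Var → LTLQF AP Var
  | neg : LTLQF AP Var → LTLQF AP Var
  | or : LTLQF AP Var → LTLQF AP Var → LTLQF AP Var
  | next : LTLQF AP Var → LTLQF AP Var
  | untl : LTLQF AP Var → LTLQF AP Var → LTLQF AP Var

/-- The positive Boolean closure `B⁺(HyperLTL)`:
`ψ ::= ∃π ψ | ∀π ψ | ψ ∨ ψ | ψ ∧ ψ | φ` with `φ` a quantifier-free LTL formula. -/
inductive BForm (AP Var : Type) : Type where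
  | qf : LTLQF AP Var → BForm AP Var
  | or : BForm AP Var → BForm AP Var → BForm AP Var
  | and : BForm AP Var → BForm AP Var → BForm AP Var
  | ex : Var → BForm AP Var → BForm AP Var
  | all : Var → BForm AP Var → BForm AP Var

variable {AP Var : Type}

/-- Satisfaction value of quantifier-free LTL formulas. -/
def lsem : LTLQF AP Var → (Var → Trace AP) → Set (Trace AP) → ℝ
  | .atom p π, ρ, _ => (ρ π 0 p : ℝ)
  | .neg φ, ρ, T => 1 - lsem φ ρ T
  | .or φ₁ φ₂, ρ, T => max (lsem φ₁ ρ T) (lsem φ₂ ρ T)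
  | .next φ, ρ, T => lsem φ (shiftA ρ 1) T
  | .untl φ₁ φ₂, ρ, T =>
      ⨆ i : ℕ, min (lsem φ₂ (shiftA ρ i) T)
        (prefMin (fun j => lsem φ₁ (shiftA ρ j) T) i)

/-- Satisfaction value `⟦ψ⟧_Π^T` of `B⁺(HyperLTL)` formulas. -/
def bsem [DecidableEq Var] : BForm AP Var → (Var → Trace AP) → Set (Trace AP) → ℝ
  | .qf φ, ρ, T => lsem φ ρ T
  | .or ψ₁ ψ₂, ρ, T => max (bsem ψ₁ ρ T) (bsem ψ₂ ρ T)
  | .and ψ₁ ψ₂, ρ, T => min (bsem ψ₁ ρ T) (bsem ψ₂ ρ T)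
  | .ex π ψ, ρ, T => sSup ((fun t => bsem ψ (Function.update ρ π t) T) '' T)
  | .all π ψ, ρ, T => sInf ((fun t => bsem ψ (Function.update ρ π t) T) '' T)

/-- Prenex form: a prefix of quantifiers followed by a quantifier-free formula. -/
def IsPrenex : BForm AP Var → Prop
  | .qf _ => True
  | .or _ _ => False
  | .and _ _ => False
  | .ex _ ψ => IsPrenex ψ
  | .all _ ψ => IsPrenex ψ

/-- Number of existential quantifiers. -/
def numEx : BForm AP Var → ℕ
  | .qf _ => 0
  | .or ψ₁ ψ₂ => numEx ψ₁ + numEx ψ₂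
  | .and ψ₁ ψ₂ => numEx ψ₁ + numEx ψ₂
  | .ex _ ψ => numEx ψ + 1
  | .all _ ψ => numEx ψ

/-- Number of universal quantifiers. -/
def numAll : BForm AP Var → ℕ
  | .qf _ => 0
  | .or ψ₁ ψ₂ => numAll ψ₁ + numAll ψ₂
  | .and ψ₁ ψ₂ => numAll ψ₁ + numAll ψ₂
  | .ex _ ψ => numAll ψ
  | .all _ ψ => numAll ψ + 1

/-- Maximal number of quantifier alternations along a branch, assuming the last quantifier
seen above was existential (`q = true`) or universal (`q = false`). -/
def altFrom : Bool → BForm AP Var → ℕ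
  | _, .qf _ => 0
  | q, .or ψ₁ ψ₂ => max (altFrom q ψ₁) (altFrom q ψ₂)
  | q, .and ψ₁ ψ₂ => max (altFrom q ψ₁) (altFrom q ψ₂)
  | q, .ex _ ψ => if q then altFrom true ψ else altFrom true ψ + 1
  | q, .all _ ψ => if q then altFrom false ψ + 1 else altFrom false ψ

/-- The alternation depth `α(ψ)`: the maximal number of quantifier alternations (from
existential to universal or vice versa) along a branch of the syntax tree of `ψ`. -/
def altDepth : BForm AP Var → ℕ
  | .qf _ => 0
  | .or ψ₁ ψ₂ => max (altDepth ψ₁) (altDepth ψ₂)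
  | .and ψ₁ ψ₂ => max (altDepth ψ₁) (altDepth ψ₂)
  | .ex _ ψ => altFrom true ψ
  | .all _ ψ => altFrom false ψ

/-!
Quantifiers are pulled out of a disjunction or conjunction of two prenex formulas one at a time,
after renaming the bound variable to a fresh one. Reading the two quantifier prefixes below a fixed
quantifier type `q`, one first exhausts the leading quantifiers of type `q` on both sides, and only
then lets both sides switch type together; this way the merged prefix has only as many
alternations below `q` as the worse of the two. Hence, relative to a fixed `q`, prenexing costs no
alternation at all. The alternation count below `q` exceeds the alternation depth by at most one,
which is the only loss in the theorem.
-/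

/-- Supremum (`true`) or infimum (`false`): the value of a quantifier, with the same encoding of
the quantifier type as in `altFrom`. -/
def quantVal {α : Type*} [SupSet α] [InfSet α] : Bool → Set α → α
  | true, A => sSup A
  | false, A => sInf A

/-- Maximum (`true`) or minimum (`false`): the value of a disjunction or conjunction. -/
def connVal {α : Type*} [LinearOrder α] : Bool → α → α → α
  | true, x, y => max x y
  | false, x, y => min x y

section Values

variable {α : Type*}

theorem connVal_comm [LinearOrder α] (c : Bool) (x y : α) : connVal c x y = connVal c y x := by
  cases c
  · exact min_comm x y
  · exact max_comm x y

theorem connVal_mem [LinearOrder α] (c : Bool) {s : Set α} {x y : α} (hx : x ∈ s) (hy : y ∈ s) :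
    connVal c x y ∈ s := by
  cases c
  · exact min_rec' (· ∈ s) hx hy
  · exact max_rec' (· ∈ s) hx hy

theorem monotone_connVal_left [LinearOrder α] (c : Bool) (y : α) :
    Monotone fun x => connVal c x y := by
  cases c
  · exact fun _ _ h => min_le_min_right y h
  · exact fun _ _ h => max_le_max_right y h

theorem continuous_connVal_left [LinearOrder α] [TopologicalSpace α] [OrderClosedTopology α]
    (c : Bool) (y : α) : Continuous fun x => connVal c x y := by
  cases c
  · exact continuous_id.min continuous_const
  · exact continuous_id.max continuous_const

theorem quantVal_mem_Icc [ConditionallyCompleteLattice α] (b : Bool) {A : Set α} {x y : α}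
    (hne : A.Nonempty) (hA : A ⊆ Icc x y) : quantVal b A ∈ Icc x y := by
  obtain ⟨a, ha⟩ := hne
  cases b
  · exact ⟨le_csInf ⟨a, ha⟩ fun _ h => (hA h).1,
      (csInf_le (bddBelow_Icc.mono hA) ha).trans (hA ha).2⟩
  · exact ⟨(hA ha).1.trans (le_csSup (bddAbove_Icc.mono hA) ha),
      csSup_le ⟨a, ha⟩ fun _ h => (hA h).2⟩

theorem connVal_quantVal [ConditionallyCompleteLinearOrder α] [TopologicalSpace α]
    [OrderTopology α] (c b : Bool) {A : Set α} (hne : A.Nonempty) (hbelow : BddBelow A)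
    (habove : BddAbove A) (y : α) :
    connVal c (quantVal b A) y = quantVal b ((connVal c · y) '' A) := by
  have hmono := monotone_connVal_left c y
  have hcont := continuous_connVal_left c y
  cases b
  · exact hmono.map_csInf_of_continuousAt hcont.continuousAt hne hbelow
  · exact hmono.map_csSup_of_continuousAt hcont.continuousAt hne habove

end Values

namespace LTLQF

/-- Renaming of the trace variables of a quantifier-free formula. -/
def rename (σ : Var → Var) : LTLQF AP Var → LTLQF AP Var
  | .atom p π => .atom p (σ π)
  | .neg φ => .neg (φ.rename σ)
  | .or φ₁ φ₂ => .or (φ₁.rename σ) (φ₂.rename σ)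
  | .next φ => .next (φ.rename σ)
  | .untl φ₁ φ₂ => .untl (φ₁.rename σ) (φ₂.rename σ)

/-- The trace variables occurring in a quantifier-free formula. -/
def vars [DecidableEq Var] : LTLQF AP Var → Finset Var
  | .atom _ π => {π}
  | .neg φ => φ.vars
  | .or φ₁ φ₂ => φ₁.vars ∪ φ₂.vars
  | .next φ => φ.vars
  | .untl φ₁ φ₂ => φ₁.vars ∪ φ₂.vars

/-- The disjunction (`true`) or conjunction (`false`) of two quantifier-free formulas; the latter
is expressed by De Morgan duality, as `LTLQF` has no primitive conjunction. -/
def conn : Bool → LTLQF AP Var → LTLQF AP Var → LTLQF AP Var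
  | true, φ₁, φ₂ => .or φ₁ φ₂
  | false, φ₁, φ₂ => .neg (.or (.neg φ₁) (.neg φ₂))

end LTLQF

theorem lsem_conn (c : Bool) (φ₁ φ₂ : LTLQF AP Var) (ρ : Var → Trace AP) (T : Set (Trace AP)) :
    lsem (.conn c φ₁ φ₂) ρ T = connVal c (lsem φ₁ ρ T) (lsem φ₂ ρ T) := by
  cases c
  · simp only [LTLQF.conn, lsem, connVal, max_sub_sub_left, sub_sub_cancel]
  · rfl

theorem lsem_rename (σ : Var → Var) (φ : LTLQF AP Var) (ρ : Var → Trace AP)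
    (T : Set (Trace AP)) : lsem (φ.rename σ) ρ T = lsem φ (ρ ∘ σ) T := by
  have hshift (ρ : Var → Trace AP) (i : ℕ) : shiftA ρ i ∘ σ = shiftA (ρ ∘ σ) i := rfl
  induction φ generalizing ρ with
  | atom p π => rfl
  | neg φ ih => simp only [LTLQF.rename, lsem, ih]
  | or φ₁ φ₂ ih₁ ih₂ => simp only [LTLQF.rename, lsem, ih₁, ih₂]
  | next φ ih => simp only [LTLQF.rename, lsem, ih, hshift]
  | untl φ₁ φ₂ ih₁ ih₂ => simp only [LTLQF.rename, lsem, ih₁, ih₂, hshift]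

theorem lsem_congr [DecidableEq Var] {φ : LTLQF AP Var} {ρ ρ' : Var → Trace AP}
    (h : ∀ x ∈ φ.vars, ρ x = ρ' x) (T : Set (Trace AP)) : lsem φ ρ T = lsem φ ρ' T := by
  have hshift {S : Finset Var} {ρ ρ' : Var → Trace AP} (h : ∀ x ∈ S, ρ x = ρ' x) (i : ℕ) :
      ∀ x ∈ S, shiftA ρ i x = shiftA ρ' i x :=
    fun x hx => congrArg (fun t n => t (n + i)) (h x hx)
  induction φ generalizing ρ ρ' with
  | atom p π => simp only [lsem, h π (Finset.mem_singleton_self π)]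
  | neg φ ih => simp only [lsem, ih h]
  | or φ₁ φ₂ ih₁ ih₂ =>
    obtain ⟨h₁, h₂⟩ := Finset.forall_mem_union.1 h
    simp only [lsem, ih₁ h₁, ih₂ h₂]
  | next φ ih => exact ih (hshift h 1)
  | untl φ₁ φ₂ ih₁ ih₂ =>
    obtain ⟨h₁, h₂⟩ := Finset.forall_mem_union.1 h
    simp only [lsem, ih₁ (hshift h₁ _), ih₂ (hshift h₂ _)]

theorem prefMin_nonneg {g : ℕ → ℝ} (hg : ∀ j, 0 ≤ g j) : ∀ i, 0 ≤ prefMin g i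
  | 0 => zero_le_one
  | i + 1 => le_min (prefMin_nonneg hg i) (hg i)

theorem lsem_mem_Icc (φ : LTLQF AP Var) (ρ : Var → Trace AP) (T : Set (Trace AP)) :
    lsem φ ρ T ∈ Icc (0 : ℝ) 1 := by
  induction φ generalizing ρ with
  | atom p π => exact (ρ π 0 p).2
  | neg φ ih => exact Icc.mem_iff_one_sub_mem.1 (ih ρ)
  | or φ₁ φ₂ ih₁ ih₂ => exact connVal_mem true (ih₁ ρ) (ih₂ ρ)
  | next _ ih => exact ih _
  | untl φ₁ φ₂ ih₁ ih₂ =>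
    exact ⟨Real.iSup_nonneg fun i => le_min (ih₂ _).1 (prefMin_nonneg (fun _ => (ih₁ _).1) i),
      ciSup_le fun i => (min_le_left _ _).trans (ih₂ _).2⟩

namespace BForm

/-- The existential (`true`) or universal (`false`) quantification of a formula. -/
def quant : Bool → Var → BForm AP Var → BForm AP Var
  | true, π, ψ => .ex π ψ
  | false, π, ψ => .all π ψ

/-- The disjunction (`true`) or conjunction (`false`) of two formulas. -/
def conn : Bool → BForm AP Var → BForm AP Var → BForm AP Var
  | true, ψ₁, ψ₂ => .or ψ₁ ψ₂
  | false, ψ₁, ψ₂ => .and ψ₁ ψ₂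

/-- Renaming of all trace variables of a formula, bound ones included, so that injective
renamings never capture a variable. -/
def rename (σ : Var → Var) : BForm AP Var → BForm AP Var
  | .qf φ => .qf (φ.rename σ)
  | .or ψ₁ ψ₂ => .or (ψ₁.rename σ) (ψ₂.rename σ)
  | .and ψ₁ ψ₂ => .and (ψ₁.rename σ) (ψ₂.rename σ)
  | .ex π ψ => .ex (σ π) (ψ.rename σ)
  | .all π ψ => .all (σ π) (ψ.rename σ)

/-- The free trace variables of a formula. -/
def freeVars [DecidableEq Var] : BForm AP Var → Finset Var
  | .qf φ => φ.vars
  | .or ψ₁ ψ₂ => ψ₁.freeVars ∪ ψ₂.freeVars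
  | .and ψ₁ ψ₂ => ψ₁.freeVars ∪ ψ₂.freeVars
  | .ex π ψ => ψ.freeVars.erase π
  | .all π ψ => ψ.freeVars.erase π

theorem freeVars_quant [DecidableEq Var] (b : Bool) (π : Var) (ψ : BForm AP Var) :
    (quant b π ψ).freeVars = ψ.freeVars.erase π := by
  cases b <;> rfl

end BForm

section Polarity

variable (b c q : Bool) (π : Var) (ψ ψ₁ ψ₂ : BForm AP Var)

@[simp] theorem isPrenex_quant : IsPrenex (.quant b π ψ) ↔ IsPrenex ψ := by cases b <;> rfl

@[simp] theorem numEx_quant : numEx (.quant b π ψ) = numEx ψ + b.toNat := by cases b <;> rfl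

@[simp] theorem numEx_conn : numEx (.conn c ψ₁ ψ₂) = numEx ψ₁ + numEx ψ₂ := by cases c <;> rfl

@[simp] theorem numAll_quant : numAll (.quant b π ψ) = numAll ψ + (!b).toNat := by
  cases b <;> rfl

@[simp] theorem numAll_conn : numAll (.conn c ψ₁ ψ₂) = numAll ψ₁ + numAll ψ₂ := by
  cases c <;> rfl

@[simp] theorem altFrom_quant :
    altFrom q (.quant b π ψ) = altFrom b ψ + if q = b then 0 else 1 := by
  cases b <;> cases q <;> rfl

@[simp] theorem altFrom_conn :
    altFrom q (.conn c ψ₁ ψ₂) = max (altFrom q ψ₁) (altFrom q ψ₂) := by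
  cases c <;> rfl

theorem bsem_quant [DecidableEq Var] (ρ : Var → Trace AP) (T : Set (Trace AP)) :
    bsem (.quant b π ψ) ρ T =
      quantVal b ((fun t => bsem ψ (Function.update ρ π t) T) '' T) := by
  cases b <;> rfl

theorem bsem_conn [DecidableEq Var] (ρ : Var → Trace AP) (T : Set (Trace AP)) :
    bsem (.conn c ψ₁ ψ₂) ρ T = connVal c (bsem ψ₁ ρ T) (bsem ψ₂ ρ T) := by
  cases c <;> rfl

end Polarity

section Rename

variable (σ : Var → Var) (ψ : BForm AP Var)

@[simp] theorem isPrenex_rename : IsPrenex (ψ.rename σ) ↔ IsPrenex ψ := by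
  induction ψ with
  | qf | or | and => rfl
  | ex _ _ ih | all _ _ ih => exact ih

@[simp] theorem numEx_rename : numEx (ψ.rename σ) = numEx ψ := by
  induction ψ <;> simp_all only [BForm.rename, numEx]

@[simp] theorem numAll_rename : numAll (ψ.rename σ) = numAll ψ := by
  induction ψ <;> simp_all only [BForm.rename, numAll]

@[simp] theorem altFrom_rename (q : Bool) : altFrom q (ψ.rename σ) = altFrom q ψ := by
  induction ψ generalizing q <;> simp_all only [BForm.rename, altFrom]

end Rename

/-- Allows bound variables to be replaced by fresh ones in the middle of an induction. -/
@[elab_as_elim]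
theorem IsPrenex.induction_rename {P : ∀ ψ : BForm AP Var, IsPrenex ψ → Prop}
    (qf : ∀ φ, P (.qf φ) trivial)
    (quant : ∀ b π ψ (h : IsPrenex ψ), (∀ σ, P (ψ.rename σ) ((isPrenex_rename σ ψ).2 h)) →
      P (.quant b π ψ) ((isPrenex_quant b π ψ).2 h)) :
    ∀ {ψ : BForm AP Var} (h : IsPrenex ψ), P ψ h
  | .qf φ, _ => qf φ
  | .ex π ψ, h => quant true π ψ h fun σ => induction_rename qf quant ((isPrenex_rename σ ψ).2 h)
  | .all π ψ, h => quant false π ψ h fun σ => induction_rename qf quant ((isPrenex_rename σ ψ).2 h)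
termination_by ψ => numEx ψ + numAll ψ
decreasing_by all_goals simp only [numEx, numAll, numEx_rename, numAll_rename]; omega

section Semantics

variable [DecidableEq Var]

theorem bsem_rename {σ : Var → Var} (hσ : σ.Injective) (ψ : BForm AP Var) (ρ : Var → Trace AP)
    (T : Set (Trace AP)) : bsem (ψ.rename σ) ρ T = bsem ψ (ρ ∘ σ) T := by
  induction ψ generalizing ρ with
  | qf φ => exact lsem_rename σ φ ρ T
  | or ψ₁ ψ₂ ih₁ ih₂ | and ψ₁ ψ₂ ih₁ ih₂ => simp only [BForm.rename, bsem, ih₁, ih₂]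
  | ex π ψ ih | all π ψ ih =>
    simp only [BForm.rename, bsem, ih, Function.update_comp_eq_of_injective _ hσ]

theorem bsem_mem_Icc (ψ : BForm AP Var) (ρ : Var → Trace AP) {T : Set (Trace AP)}
    (hT : T.Nonempty) : bsem ψ ρ T ∈ Icc (0 : ℝ) 1 := by
  induction ψ generalizing ρ with
  | qf φ => exact lsem_mem_Icc φ ρ T
  | or ψ₁ ψ₂ ih₁ ih₂ => exact connVal_mem true (ih₁ ρ) (ih₂ ρ)
  | and ψ₁ ψ₂ ih₁ ih₂ => exact connVal_mem false (ih₁ ρ) (ih₂ ρ)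
  | ex π ψ ih => exact quantVal_mem_Icc true (hT.image _) (image_subset_iff.2 fun _ _ => ih _)
  | all π ψ ih => exact quantVal_mem_Icc false (hT.image _) (image_subset_iff.2 fun _ _ => ih _)

theorem bsem_congr {ψ : BForm AP Var} {ρ ρ' : Var → Trace AP}
    (h : ∀ x ∈ ψ.freeVars, ρ x = ρ' x) (T : Set (Trace AP)) : bsem ψ ρ T = bsem ψ ρ' T := by
  induction ψ generalizing ρ ρ' with
  | qf φ => exact lsem_congr h T
  | or ψ₁ ψ₂ ih₁ ih₂ | and ψ₁ ψ₂ ih₁ ih₂ =>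
    obtain ⟨h₁, h₂⟩ := Finset.forall_mem_union.1 h
    simp only [bsem, ih₁ h₁, ih₂ h₂]
  | ex π ψ ih | all π ψ ih =>
    have hupdate (t : Trace AP) : ∀ x ∈ ψ.freeVars,
        Function.update ρ π t x = Function.update ρ' π t x := fun x hx => by
      obtain rfl | hxπ := eq_or_ne x π
      · simp only [Function.update_self]
      · simp only [Function.update_of_ne hxπ, h x (Finset.mem_erase.2 ⟨hxπ, hx⟩)]
    simp only [bsem, ih (hupdate _)]

theorem bsem_update_of_notMem {ψ : BForm AP Var} {π : Var} (hπ : π ∉ ψ.freeVars)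
    (ρ : Var → Trace AP) (t : Trace AP) (T : Set (Trace AP)) :
    bsem ψ (Function.update ρ π t) T = bsem ψ ρ T :=
  bsem_congr (fun _ hx => Function.update_of_ne (ne_of_mem_of_not_mem hx hπ) t ρ) T

theorem bsem_quant_conn (b c : Bool) (π : Var) (ψ : BForm AP Var) {θ : BForm AP Var}
    (hπ : π ∉ θ.freeVars) (ρ : Var → Trace AP) {T : Set (Trace AP)} (hT : T.Nonempty) :
    bsem (.quant b π (.conn c ψ θ)) ρ T = bsem (.conn c (.quant b π ψ) θ) ρ T := by
  have hvalues : (fun t => bsem ψ (Function.update ρ π t) T) '' T ⊆ Icc 0 1 :=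
    image_subset_iff.2 fun _ _ => bsem_mem_Icc ψ _ hT
  rw [bsem_conn, bsem_quant, bsem_quant, connVal_quantVal c b (hT.image _)
    (bddBelow_Icc.mono hvalues) (bddAbove_Icc.mono hvalues), image_image]
  simp only [bsem_conn, bsem_update_of_notMem hπ]

theorem bsem_quant_rename_swap (b : Bool) {π v : Var} {ψ : BForm AP Var}
    (hv : v ∉ (BForm.quant b π ψ).freeVars) (ρ : Var → Trace AP) (T : Set (Trace AP)) :
    bsem (.quant b v (ψ.rename (Equiv.swap π v))) ρ T = bsem (.quant b π ψ) ρ T := by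
  have hbody (t : Trace AP) :
      bsem (ψ.rename (Equiv.swap π v)) (Function.update ρ v t) T =
        bsem ψ (Function.update ρ π t) T := by
    rw [bsem_rename (Equiv.injective _)]
    refine bsem_congr (fun x hx => ?_) T
    obtain rfl | hxπ := eq_or_ne x π
    · simp only [Function.comp_apply, Equiv.swap_apply_left, Function.update_self]
    · have hxv : x ≠ v := by
        rintro rfl
        exact hv (BForm.freeVars_quant b π ψ ▸ Finset.mem_erase.2 ⟨hxπ, hx⟩)
      simp only [Function.comp_apply, Equiv.swap_apply_of_ne_of_ne hxπ hxv,
        Function.update_of_ne hxπ, Function.update_of_ne hxv]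
  simp only [bsem_quant, hbody]

end Semantics

/-- `Refines q χ ψ`: the formula `χ` may replace `ψ` below a quantifier of type `q`, being
semantically equivalent to it, with the same number of quantifiers of each type and no more
alternations. -/
structure Refines [DecidableEq Var] (q : Bool) (χ ψ : BForm AP Var) : Prop where
  bsem_eq : ∀ (ρ : Var → Trace AP) {T : Set (Trace AP)}, T.Nonempty → bsem χ ρ T = bsem ψ ρ T
  numEx_eq : numEx χ = numEx ψ
  numAll_eq : numAll χ = numAll ψ
  altFrom_le : altFrom q χ ≤ altFrom q ψ

namespace Refines

variable [DecidableEq Var] {q : Bool} {χ ψ θ χ₁ χ₂ ψ₁ ψ₂ : BForm AP Var}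

theorem refl (q : Bool) (ψ : BForm AP Var) : Refines q ψ ψ :=
  ⟨fun _ _ _ => rfl, rfl, rfl, le_rfl⟩

theorem trans (h : Refines q χ ψ) (h' : Refines q ψ θ) : Refines q χ θ where
  bsem_eq ρ _ hT := (h.bsem_eq ρ hT).trans (h'.bsem_eq ρ hT)
  numEx_eq := h.numEx_eq.trans h'.numEx_eq
  numAll_eq := h.numAll_eq.trans h'.numAll_eq
  altFrom_le := h.altFrom_le.trans h'.altFrom_le

theorem quant {b : Bool} (h : Refines b χ ψ) (q : Bool) (π : Var) :
    Refines q (.quant b π χ) (.quant b π ψ) where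
  bsem_eq ρ T hT := by simp only [bsem_quant, h.bsem_eq _ hT]
  numEx_eq := by simp only [numEx_quant, h.numEx_eq]
  numAll_eq := by simp only [numAll_quant, h.numAll_eq]
  altFrom_le := by simpa only [altFrom_quant] using Nat.add_le_add_right h.altFrom_le _

theorem conn (c : Bool) (h₁ : Refines q χ₁ ψ₁) (h₂ : Refines q χ₂ ψ₂) :
    Refines q (.conn c χ₁ χ₂) (.conn c ψ₁ ψ₂) where
  bsem_eq ρ T hT := by simp only [bsem_conn, h₁.bsem_eq ρ hT, h₂.bsem_eq ρ hT]
  numEx_eq := by simp only [numEx_conn, h₁.numEx_eq, h₂.numEx_eq]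
  numAll_eq := by simp only [numAll_conn, h₁.numAll_eq, h₂.numAll_eq]
  altFrom_le := by simpa only [altFrom_conn] using max_le_max h₁.altFrom_le h₂.altFrom_le

theorem conn_comm (q c : Bool) (ψ₁ ψ₂ : BForm AP Var) :
    Refines q (.conn c ψ₁ ψ₂) (.conn c ψ₂ ψ₁) where
  bsem_eq ρ T _ := by rw [bsem_conn, bsem_conn, connVal_comm]
  numEx_eq := by rw [numEx_conn, numEx_conn, add_comm]
  numAll_eq := by rw [numAll_conn, numAll_conn, add_comm]
  altFrom_le := by rw [altFrom_conn, altFrom_conn, max_comm]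

theorem qf_conn (q c : Bool) (φ₁ φ₂ : LTLQF AP Var) :
    Refines q (.qf (.conn c φ₁ φ₂)) (.conn c (.qf φ₁) (.qf φ₂)) where
  bsem_eq ρ T _ := by simp only [bsem_conn, bsem, lsem_conn]
  numEx_eq := by simp only [numEx_conn, numEx]
  numAll_eq := by simp only [numAll_conn, numAll]
  altFrom_le := Nat.zero_le _

theorem quant_rename_swap (q b : Bool) {π v : Var} (hv : v ∉ (BForm.quant b π ψ).freeVars) :
    Refines q (.quant b v (ψ.rename (Equiv.swap π v))) (.quant b π ψ) where
  bsem_eq ρ T _ := bsem_quant_rename_swap b hv ρ T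
  numEx_eq := by simp only [numEx_quant, numEx_rename]
  numAll_eq := by simp only [numAll_quant, numAll_rename]
  altFrom_le := by simp only [altFrom_quant, altFrom_rename, le_refl]

theorem quant_conn {b c : Bool} {π : Var} (hπ : π ∉ θ.freeVars)
    (halt : altFrom q (.quant b π (.conn c ψ θ)) ≤ altFrom q (.conn c (.quant b π ψ) θ)) :
    Refines q (.quant b π (.conn c ψ θ)) (.conn c (.quant b π ψ) θ) where
  bsem_eq ρ _ hT := bsem_quant_conn b c π ψ hπ ρ hT
  numEx_eq := by simp only [numEx_quant, numEx_conn]; omega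
  numAll_eq := by simp only [numAll_quant, numAll_conn]; omega
  altFrom_le := halt

end Refines

/-- `ψ` has a prenex form that may replace it below a quantifier of type `q` without increasing
the number of alternations. -/
def HasPrenexForm [DecidableEq Var] (q : Bool) (ψ : BForm AP Var) : Prop :=
  ∃ χ, IsPrenex χ ∧ Refines q χ ψ

namespace HasPrenexForm

variable [DecidableEq Var] {q b c : Bool} {π : Var} {χ ψ θ ψ₁ ψ₂ : BForm AP Var}

theorem of_refines (hχ : HasPrenexForm q χ) (h : Refines q χ ψ) : HasPrenexForm q ψ := by
  obtain ⟨χ', hprenex, hχ'⟩ := hχ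
  exact ⟨χ', hprenex, hχ'.trans h⟩

theorem quant (h : HasPrenexForm b ψ) (q : Bool) (π : Var) : HasPrenexForm q (.quant b π ψ) := by
  obtain ⟨χ, hprenex, hχ⟩ := h
  exact ⟨.quant b π χ, (isPrenex_quant b π χ).2 hprenex, hχ.quant q π⟩

variable [Infinite Var]

theorem conn_quant_left (h : ∀ σ, HasPrenexForm b (.conn c (ψ.rename σ) θ))
    (halt : altFrom q (.quant b π (.conn c ψ θ)) ≤ altFrom q (.conn c (.quant b π ψ) θ)) :
    HasPrenexForm q (.conn c (.quant b π ψ) θ) := by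
  obtain ⟨v, hv⟩ := Infinite.exists_notMem_finset ((BForm.quant b π ψ).freeVars ∪ θ.freeVars)
  obtain ⟨hvψ, hvθ⟩ := Finset.notMem_union.1 hv
  refine ((h (Equiv.swap π v)).quant q v).of_refines (.trans (.quant_conn hvθ ?_)
    ((Refines.quant_rename_swap q b hvψ).conn c (.refl q θ)))
  simpa only [altFrom_quant, altFrom_conn, altFrom_rename] using halt

theorem conn_quant_right (h : ∀ σ, HasPrenexForm b (.conn c θ (ψ.rename σ)))
    (halt : altFrom q (.quant b π (.conn c θ ψ)) ≤ altFrom q (.conn c θ (.quant b π ψ))) :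
    HasPrenexForm q (.conn c θ (.quant b π ψ)) := by
  refine (conn_quant_left (fun σ => (h σ).of_refines (.conn_comm b c _ _)) ?_).of_refines
    (.conn_comm q c _ _)
  simpa only [altFrom_quant, altFrom_conn, max_comm] using halt

theorem conn_of_isPrenex (q c : Bool) (h₁ : IsPrenex ψ₁) (h₂ : IsPrenex ψ₂) :
    HasPrenexForm q (.conn c ψ₁ ψ₂) := by
  induction h₁ using IsPrenex.induction_rename generalizing q ψ₂ with
  | qf φ₁ =>
    induction h₂ using IsPrenex.induction_rename generalizing q with
    | qf φ₂ => exact ⟨.qf (.conn c φ₁ φ₂), trivial, .qf_conn q c φ₁ φ₂⟩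
    | quant b₂ π₂ ψ₂ _ ih₂ =>
      exact conn_quant_right (fun σ => ih₂ σ b₂) (by simp [altFrom])
  | quant b₁ π₁ ψ₁ _ ih₁ =>
    induction h₂ using IsPrenex.induction_rename generalizing q with
    | qf φ₂ => exact conn_quant_left (fun σ => ih₁ σ b₁ trivial) (by simp [altFrom])
    | quant b₂ π₂ ψ₂ h₂ ih₂ =>
      by_cases hb : b₁ = q ∨ b₁ = b₂
      · refine conn_quant_left (fun σ => ih₁ σ b₁ ((isPrenex_quant b₂ π₂ ψ₂).2 h₂)) ?_
        obtain rfl | rfl := hb <;> simp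
      · obtain ⟨hq, hb₂⟩ := not_or.1 hb
        obtain rfl : q = b₂ := (Bool.eq_not.2 (Ne.symm hq)).trans (Bool.eq_not.2 (Ne.symm hb₂)).symm
        exact conn_quant_right (fun σ => ih₂ σ q) (by simp)

theorem conn (c : Bool) (h₁ : HasPrenexForm q ψ₁) (h₂ : HasPrenexForm q ψ₂) :
    HasPrenexForm q (.conn c ψ₁ ψ₂) := by
  obtain ⟨χ₁, hprenex₁, hχ₁⟩ := h₁
  obtain ⟨χ₂, hprenex₂, hχ₂⟩ := h₂
  exact (conn_of_isPrenex q c hprenex₁ hprenex₂).of_refines (hχ₁.conn c hχ₂)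

end HasPrenexForm

theorem hasPrenexForm [DecidableEq Var] [Infinite Var] (q : Bool) (ψ : BForm AP Var) :
    HasPrenexForm q ψ := by
  induction ψ generalizing q with
  | qf φ => exact ⟨.qf φ, trivial, .refl q _⟩
  | or ψ₁ ψ₂ ih₁ ih₂ => exact (ih₁ q).conn true (ih₂ q)
  | and ψ₁ ψ₂ ih₁ ih₂ => exact (ih₁ q).conn false (ih₂ q)
  | ex π ψ ih => exact (ih true).quant q π
  | all π ψ ih => exact (ih false).quant q π

theorem altDepth_le_altFrom (q : Bool) (ψ : BForm AP Var) : altDepth ψ ≤ altFrom q ψ := by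
  induction ψ with
  | qf φ => exact le_rfl
  | or ψ₁ ψ₂ ih₁ ih₂ | and ψ₁ ψ₂ ih₁ ih₂ => exact max_le_max ih₁ ih₂
  | ex π ψ | all π ψ => cases q <;> simp [altDepth, altFrom]

theorem altFrom_le_altDepth_add_one (q : Bool) (ψ : BForm AP Var) :
    altFrom q ψ ≤ altDepth ψ + 1 := by
  induction ψ with
  | qf φ => exact Nat.zero_le _
  | or ψ₁ ψ₂ ih₁ ih₂ | and ψ₁ ψ₂ ih₁ ih₂ => simp only [altFrom, altDepth]; omega
  | ex π ψ | all π ψ => cases q <;> simp [altDepth, altFrom]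

theorem stmt_5_general [DecidableEq Var] [Infinite Var] (ψ : BForm AP Var) :
    ∃ ψ' : BForm AP Var,
      IsPrenex ψ' ∧
      (∀ (ρ : Var → Trace AP) (T : Set (Trace AP)), T.Nonempty → bsem ψ ρ T = bsem ψ' ρ T) ∧
      numEx ψ' = numEx ψ ∧ numAll ψ' = numAll ψ ∧
      altDepth ψ' ≤ altDepth ψ + 1 := by
  obtain ⟨χ, hprenex, hχ⟩ := hasPrenexForm true ψ
  refine ⟨χ, hprenex, fun ρ T hT => (hχ.bsem_eq ρ hT).symm, hχ.numEx_eq, hχ.numAll_eq, ?_⟩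
  calc altDepth χ ≤ altFrom true χ := altDepth_le_altFrom true χ
    _ ≤ altFrom true ψ := hχ.altFrom_le
    _ ≤ altDepth ψ + 1 := altFrom_le_altDepth_add_one true ψ

/-- Every `B⁺(HyperLTL)` formula `ψ` is equivalent (over nonempty sets of
Boolean traces) to a prenex formula `ψ*` with the same number of existential and universal
quantifiers and alternation depth `α(ψ*) ≤ α(ψ) + 1`. -/
theorem stmt_5 [DecidableEq Var] [Infinite Var] (ψ : BForm AP Var) :
    ∃ ψ' : BForm AP Var,
      IsPrenex ψ' ∧
      (∀ (ρ : Var → Trace AP) (T : Set (Trace AP)),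
        T ⊆ {t | IsBoolTrace t} → T.Nonempty → bsem ψ ρ T = bsem ψ' ρ T) ∧
      numEx ψ' = numEx ψ ∧ numAll ψ' = numAll ψ ∧
      altDepth ψ' ≤ altDepth ψ + 1 := by
  obtain ⟨ψ', hprenex, hsem, hcounts⟩ := stmt_5_general ψ
  exact ⟨ψ', hprenex, fun ρ T _ hT => hsem ρ T hT, hcounts⟩

end
end

section
/- For every k ∈ ℕ, every finite set H of discounting sequences, every finite set W ⊆ [0,1], and every a ∈ (0,1), the set V_{k,H,W} ∩ [a,1] is finite. -/
open Set

noncomputable section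

/-- A discounting sequence: strictly decreasing, with values in `[0,1]` and limit `0`. -/
def IsDiscounting (η : ℕ → ℝ) : Prop :=
  StrictAnti η ∧ (∀ i, η i ∈ Set.Icc (0:ℝ) 1) ∧
    Filter.Tendsto η Filter.atTop (nhds 0)

/-- The set
`V_{k,H,W} = {0,1} ∪ W ∪ {w·∏_{ℓ=1}^{k'} η^{(ℓ)}_{i_ℓ} : w ∈ W, k' ≤ k, i_ℓ ∈ ℕ, η^{(ℓ)} ∈ H}`. -/
def Vset (k : ℕ) (H : Set (ℕ → ℝ)) (W : Set ℝ) : Set ℝ :=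
  {0, 1} ∪ W ∪
    {x | ∃ w ∈ W, ∃ k' ≤ k, ∃ idx : Fin k' → ℕ, ∃ e : Fin k' → (ℕ → ℝ),
      (∀ ℓ, e ℓ ∈ H) ∧ x = w * ∏ ℓ : Fin k', e ℓ (idx ℓ)}

/-!
Sets with only finitely many elements outside each neighbourhood of `0` are bounded, and therefore
closed under products: if `‖u * v‖ ≥ ε` with `‖u‖ ≤ C` and `‖v‖ ≤ D`, then `‖u‖ ≥ ε / D` and
`‖v‖ ≥ ε / C`, which leaves finitely many choices for `u` and `v`. Finite sets and ranges of null
sequences have this property, and adjoining `1` to the union of the ranges lets a single `k`-th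
power absorb all products of at most `k` factors.
-/

open Filter Topology
open scoped Pointwise

/-- A set with only finitely many elements of norm at least `ε`, for each `ε > 0`; the analogue for
sets of a sequence converging to `0`. Quantifying over all `ε`, rather than fixing the threshold of
interest, makes the class stable under products. -/
def FiniteAwayFromZero {E : Type*} [Norm E] (s : Set E) : Prop :=
  ∀ ε : ℝ, 0 < ε → (s ∩ {x | ε ≤ ‖x‖}).Finite

namespace FiniteAwayFromZero

section Norm

variable {E : Type*} [Norm E] {s t : Set E}

theorem of_finite (hs : s.Finite) : FiniteAwayFromZero s :=
  fun _ _ => hs.inter_of_left _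

theorem mono (ht : FiniteAwayFromZero t) (hst : s ⊆ t) : FiniteAwayFromZero s :=
  fun ε hε => (ht ε hε).subset (inter_subset_inter_left _ hst)

theorem union (hs : FiniteAwayFromZero s) (ht : FiniteAwayFromZero t) :
    FiniteAwayFromZero (s ∪ t) := fun ε hε => by
  rw [union_inter_distrib_right]
  exact (hs ε hε).union (ht ε hε)

theorem biUnion {ι : Type*} {I : Set ι} {f : ι → Set E} (hI : I.Finite)
    (hf : ∀ i ∈ I, FiniteAwayFromZero (f i)) : FiniteAwayFromZero (⋃ i ∈ I, f i) := fun ε hε => by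
  rw [iUnion₂_inter]
  exact hI.biUnion fun i hi => hf i hi ε hε

theorem exists_pos_norm_le (hs : FiniteAwayFromZero s) : ∃ C > 0, ∀ x ∈ s, ‖x‖ ≤ C := by
  obtain ⟨C, hC⟩ := ((hs 1 one_pos).image (‖·‖)).bddAbove
  refine ⟨max C 1, by positivity, fun x hx => ?_⟩
  rcases le_total 1 ‖x‖ with h | h
  · exact le_max_of_le_left (hC ⟨x, ⟨hx, h⟩, rfl⟩)
  · exact le_max_of_le_right h

end Norm

theorem range_of_tendsto_cofinite {E ι : Type*} [SeminormedAddGroup E] {f : ι → E}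
    (hf : Tendsto f cofinite (𝓝 0)) : FiniteAwayFromZero (range f) := fun ε hε => by
  have hfin : {i | ε ≤ ‖f i‖}.Finite := by
    simpa only [eventually_cofinite, not_lt] using hf.norm.eventually_lt_const (by simpa using hε)
  rw [← image_preimage_eq_range_inter]
  exact hfin.image f

theorem mul {R : Type*} [NonUnitalSeminormedRing R] {s t : Set R} (hs : FiniteAwayFromZero s)
    (ht : FiniteAwayFromZero t) : FiniteAwayFromZero (s * t) := by
  intro ε hε
  obtain ⟨C, hC, hsC⟩ := hs.exists_pos_norm_le
  obtain ⟨D, hD, htD⟩ := ht.exists_pos_norm_le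
  refine ((hs (ε / D) (by positivity)).mul (ht (ε / C) (by positivity))).subset ?_
  rintro _ ⟨⟨u, hu, v, hv, rfl⟩, huv : ε ≤ ‖u * v‖⟩
  have hε_le : ε ≤ ‖u‖ * ‖v‖ := huv.trans (norm_mul_le u v)
  have hu_ge : ε / D ≤ ‖u‖ := (div_le_iff₀ hD).2 <|
    hε_le.trans (mul_le_mul_of_nonneg_left (htD v hv) (norm_nonneg u))
  have hv_ge : ε / C ≤ ‖v‖ := (div_le_iff₀' hC).2 <|
    hε_le.trans (mul_le_mul_of_nonneg_right (hsC u hu) (norm_nonneg v))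
  exact mul_mem_mul ⟨hu, hu_ge⟩ ⟨hv, hv_ge⟩

theorem pow {R : Type*} [SeminormedRing R] {s : Set R} (hs : FiniteAwayFromZero s) (n : ℕ) :
    FiniteAwayFromZero (s ^ n) := by
  induction n with
  | zero => simpa only [pow_zero] using of_finite finite_one
  | succ n ih => simpa only [pow_succ] using ih.mul hs

end FiniteAwayFromZero

theorem prod_mem_pow_card {ι M : Type*} [Fintype ι] [CommMonoid M] {s : Set M} {f : ι → M}
    (hf : ∀ i, f i ∈ s) : ∏ i, f i ∈ s ^ Fintype.card ι := by
  simpa using Set.finsetProd_mem_finsetProd Finset.univ (fun _ => s) f fun i _ => hf i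

theorem Vset_subset_union_mul_pow (k : ℕ) (H : Set (ℕ → ℝ)) (W : Set ℝ) :
    Vset k H W ⊆ {0, 1} ∪ W * insert 1 (⋃ η ∈ H, range η) ^ k := by
  set S : Set ℝ := insert 1 (⋃ η ∈ H, range η)
  have one_mem_S : 1 ∈ S := mem_insert _ _
  rintro x ((hx | hx) | ⟨w, hw, k', hk', idx, e, he, rfl⟩)
  · exact Or.inl hx
  · exact Or.inr ⟨x, hx, 1, one_mem_pow one_mem_S, mul_one x⟩
  · have hfactor : ∀ ℓ, e ℓ (idx ℓ) ∈ S := fun ℓ =>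
      mem_insert_of_mem _ (mem_biUnion (he ℓ) (mem_range_self (idx ℓ)))
    have hprod : ∏ ℓ, e ℓ (idx ℓ) ∈ S ^ k' := by
      simpa only [Fintype.card_fin] using prod_mem_pow_card hfactor
    exact Or.inr (mul_mem_mul hw (pow_subset_pow_right one_mem_S hk' hprod))

theorem stmt_8_general (k : ℕ) {H : Set (ℕ → ℝ)} (hHfin : H.Finite)
    (hH : ∀ η ∈ H, Tendsto η atTop (𝓝 0)) {W : Set ℝ} (hWfin : W.Finite) :
    FiniteAwayFromZero (Vset k H W) := by
  have hranges : FiniteAwayFromZero (⋃ η ∈ H, range η) :=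
    .biUnion hHfin fun η hη =>
      .range_of_tendsto_cofinite (Nat.cofinite_eq_atTop ▸ hH η hη)
  have hfactors : FiniteAwayFromZero (insert 1 (⋃ η ∈ H, range η)) := by
    rw [insert_eq]
    exact .union (.of_finite (finite_singleton 1)) hranges
  have hproducts : FiniteAwayFromZero (W * insert 1 (⋃ η ∈ H, range η) ^ k) :=
    .mul (.of_finite hWfin) (hfactors.pow k)
  exact .mono (.union (.of_finite (toFinite {0, 1})) hproducts) (Vset_subset_union_mul_pow k H W)

/-- For every `a ∈ (0,1)`, the set `V_{k,H,W} ∩ [a,1]` is finite. -/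
theorem stmt_8 (k : ℕ) (H : Set (ℕ → ℝ)) (hHfin : H.Finite)
    (hH : ∀ η ∈ H, IsDiscounting η)
    (W : Set ℝ) (hWfin : W.Finite) (hWsub : W ⊆ Set.Icc (0:ℝ) 1)
    (a : ℝ) (ha : a ∈ Set.Ioo (0:ℝ) 1) :
    (Vset k H W ∩ Set.Icc a 1).Finite :=
  (stmt_8_general k hHfin (fun η hη => (hH η hη).2.2) hWfin a ha.1).subset fun x hx =>
    ⟨hx.1, hx.2.1.trans (le_abs_self x)⟩

end
end

section
/- For every k ∈ ℕ, every finite set H of discounting sequences, and every finite set W ⊆ [0,1], every non-decreasing sequence (u_n) of real numbers with all values in V_{k,H,W} is eventually constant (stationary). -/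
open Set

noncomputable section

/-!
A monotone sequence with values in a set well-quasi-ordered by `≥` is eventually constant, so it
suffices to show that the possible values form such a set. The range of an antitone sequence does,
and so does a finite union of such ranges. By Higman's lemma, the finite words over a set
well-quasi-ordered by `≥` are well-quasi-ordered by the subword relation; on words with letters in
`[0, 1]` the product reverses that relation, because a further letter can only decrease it. Hence
the products of arbitrarily many factors are well-quasi-ordered by `≥`.
-/

section Preorder

variable {ι α : Type*} [Preorder ι] [WellQuasiOrderedLE ι] [Preorder α]

theorem partiallyWellOrderedOn_ge_range_of_antitone {f : ι → α} (hf : Antitone f) :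
    (range f).PartiallyWellOrderedOn (· ≥ ·) := by
  rw [← image_univ]
  exact (isPWO_of_wellQuasiOrderedLE univ).image_of_monotone_on fun _ _ _ _ hij => hf hij

theorem partiallyWellOrderedOn_ge_biUnion_range_of_antitone {F : Set (ι → α)} (hF : F.Finite)
    (hanti : ∀ f ∈ F, Antitone f) :
    (⋃ f ∈ F, range f).PartiallyWellOrderedOn (· ≥ ·) := by
  lift F to Finset (ι → α) using hF
  exact (Finset.partiallyWellOrderedOn_bUnion F).2 fun f hf =>
    partiallyWellOrderedOn_ge_range_of_antitone (hanti f hf)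

end Preorder

theorem exists_forall_ge_eq_of_monotone_of_partiallyWellOrderedOn_ge {α : Type*} [PartialOrder α]
    {s : Set α} (hs : s.PartiallyWellOrderedOn (· ≥ ·)) {u : ℕ → α} (hu : Monotone u)
    (hus : ∀ n, u n ∈ s) : ∃ N, ∀ n, N ≤ n → u n = u N := by
  obtain ⟨g, hg⟩ := hs.exists_monotone_subseq hus
  refine ⟨g 0, fun n hn => le_antisymm ?_ (hu hn)⟩
  calc u n ≤ u (g n) := hu (g.strictMono.id_le n)
    _ ≤ u (g 0) := hg 0 n n.zero_le

section Products

open scoped Pointwise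

variable {R : Type*} [MonoidWithZero R] [Preorder R] [PosMulMono R] [MulPosMono R]

theorem partiallyWellOrderedOn_ge_mul {s t : Set R} (hs : s.PartiallyWellOrderedOn (· ≥ ·))
    (ht : t.PartiallyWellOrderedOn (· ≥ ·)) (hs₀ : ∀ x ∈ s, 0 ≤ x) (ht₀ : ∀ y ∈ t, 0 ≤ y) :
    (s * t).PartiallyWellOrderedOn (· ≥ ·) := by
  rw [← image_mul_prod]
  refine (hs.prod ht).image_of_monotone_on ?_
  rintro ⟨x, y⟩ ⟨hx, -⟩ ⟨x', y'⟩ ⟨-, hy'⟩ ⟨hxx', hyy'⟩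
  exact mul_le_mul hxx' hyy' (ht₀ y' hy') (hs₀ x hx)

variable [ZeroLEOneClass R]

theorem submonoidClosure_subset_Icc {s : Set R} (hs : s ⊆ Icc 0 1) :
    (Submonoid.closure s : Set R) ⊆ Icc 0 1 := by
  intro x hx
  induction hx using Submonoid.closure_induction with
  | mem x hx => exact hs hx
  | one => exact ⟨zero_le_one, le_rfl⟩
  | mul x y _ _ hx hy => exact ⟨mul_nonneg hx.1 hy.1, mul_le_one₀ hx.2 hy.1 hy.2⟩

theorem list_prod_mem_Icc {l : List R} (hl : ∀ x ∈ l, x ∈ Icc 0 1) : l.prod ∈ Icc 0 1 :=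
  submonoidClosure_subset_Icc Subset.rfl <|
    list_prod_mem fun x hx => Submonoid.subset_closure (hl x hx)

theorem list_prod_le_prod_of_sublistForall₂_ge {l₁ l₂ : List R}
    (h : List.SublistForall₂ (· ≥ ·) l₁ l₂) (h₂ : ∀ x ∈ l₂, x ∈ Icc 0 1) :
    l₂.prod ≤ l₁.prod := by
  induction h with
  | nil => exact (list_prod_mem_Icc h₂).2
  | cons hab _ ih =>
    obtain ⟨hb, hl₂⟩ := List.forall_mem_cons.1 h₂
    rw [List.prod_cons, List.prod_cons]
    exact mul_le_mul hab (ih hl₂) (list_prod_mem_Icc hl₂).1 (hb.1.trans hab)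
  | cons_right _ ih =>
    obtain ⟨hb, hl₂⟩ := List.forall_mem_cons.1 h₂
    rw [List.prod_cons]
    exact (mul_le_of_le_one_left (list_prod_mem_Icc hl₂).1 hb.2).trans (ih hl₂)

theorem partiallyWellOrderedOn_ge_submonoidClosure {s : Set R}
    (hs : s.PartiallyWellOrderedOn (· ≥ ·)) (hs₁ : s ⊆ Icc 0 1) :
    (Submonoid.closure s : Set R).PartiallyWellOrderedOn (· ≥ ·) := by
  rw [Submonoid.closure_eq_image_prod]
  exact (hs.partiallyWellOrderedOn_sublistForall₂ (· ≥ ·)).image_of_monotone_on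
    fun _ _ _ hl h => list_prod_le_prod_of_sublistForall₂_ge h fun x hx => hs₁ (hl x hx)

end Products

open scoped Pointwise in
theorem Vset_subset_mul_submonoidClosure (k : ℕ) (H : Set (ℕ → ℝ)) (W : Set ℝ) :
    Vset k H W ⊆ {0, 1} ∪ W * (Submonoid.closure (⋃ η ∈ H, range η) : Set ℝ) := by
  rintro x ((hx | hx) | ⟨w, hw, k', -, idx, e, he, rfl⟩)
  · exact Or.inl hx
  · exact Or.inr ⟨x, hx, 1, one_mem _, mul_one x⟩
  · refine Or.inr (mul_mem_mul hw (prod_mem fun ℓ _ => Submonoid.subset_closure ?_))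
    exact mem_biUnion (he ℓ) (mem_range_self (idx ℓ))

theorem stmt_9_general (H : Set (ℕ → ℝ))
    (hHpwo : (⋃ η ∈ H, range η).PartiallyWellOrderedOn (· ≥ ·))
    (hHsub : ∀ η ∈ H, range η ⊆ Icc 0 1)
    (W : Set ℝ) (hWpwo : W.PartiallyWellOrderedOn (· ≥ ·)) (hW₀ : ∀ w ∈ W, 0 ≤ w)
    (u : ℕ → ℝ) (hu : Monotone u) (hmem : ∀ n, ∃ k, u n ∈ Vset k H W) :
    ∃ N, ∀ n, N ≤ n → u n = u N := by
  have hsub : ⋃ η ∈ H, range η ⊆ Icc 0 1 := iUnion₂_subset hHsub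
  have hprod := partiallyWellOrderedOn_ge_mul hWpwo
    (partiallyWellOrderedOn_ge_submonoidClosure hHpwo hsub) hW₀
    fun _ hy => (submonoidClosure_subset_Icc hsub hy).1
  refine exists_forall_ge_eq_of_monotone_of_partiallyWellOrderedOn_ge
    ((toFinite {0, 1}).partiallyWellOrderedOn.union hprod) hu fun n => ?_
  obtain ⟨k, hk⟩ := hmem n
  exact Vset_subset_mul_submonoidClosure k H W hk

/-- Every non-decreasing real sequence with values in `V_{k,H,W}` is
eventually constant. -/
theorem stmt_9 (k : ℕ) (H : Set (ℕ → ℝ)) (hHfin : H.Finite)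
    (hH : ∀ η ∈ H, IsDiscounting η)
    (W : Set ℝ) (hWfin : W.Finite) (hWsub : W ⊆ Set.Icc (0:ℝ) 1)
    (u : ℕ → ℝ) (hu : Monotone u) (hmem : ∀ n, u n ∈ Vset k H W) :
    ∃ N, ∀ n, N ≤ n → u n = u N :=
  stmt_9_general H
    (partiallyWellOrderedOn_ge_biUnion_range_of_antitone hHfin fun η hη => (hH η hη).1.antitone)
    (fun η hη => range_subset_iff.2 (hH η hη).2.1)
    W hWfin.partiallyWellOrderedOn (fun _ hw => (hWsub hw).1) u hu fun n => ⟨k, hmem n⟩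

end
end

section
/- For every k ∈ ℕ, every finite set H of discounting sequences, and every finite set W ⊆ [0,1], every non-increasing sequence (u_n) of real numbers with all values in V_{k,H,W} either converges to 0 or is eventually constant (stationary). -/
/-!
Say that a set concentrates at `0` if every neighbourhood of `0` contains all but finitely many of
its elements. Finite sets and ranges of null sequences concentrate at `0`, and this property is
stable under finite unions and pointwise products, so `V_{k,H,W}` concentrates at `0`.
A non-increasing sequence that takes some value infinitely often is stationary at that value;
otherwise it leaves every finite set, and within `V_{k,H,W}` this forces it to converge to `0`.
-/

open Set

noncomputable section

section Concentration

open Filter Topology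
open scoped Pointwise

/-- `S` concentrates at `a` if every neighbourhood of `a` contains all but finitely many elements
of `S`. In a Hausdorff space this makes `a` the only possible accumulation point of `S`, but it
says more: a closed discrete infinite set does not concentrate anywhere. -/
def ConcentratesAt {X : Type*} [TopologicalSpace X] (S : Set X) (a : X) : Prop :=
  ∀ U ∈ 𝓝 a, (S \ U).Finite

namespace ConcentratesAt

section TopologicalSpace

variable {X ι : Type*} [TopologicalSpace X] {S T : Set X} {a : X}

lemma mono (hT : ConcentratesAt T a) (hST : S ⊆ T) : ConcentratesAt S a :=
  fun U hU => (hT U hU).subset (sdiff_le_sdiff_right hST)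

lemma of_finite (hS : S.Finite) : ConcentratesAt S a :=
  fun _ _ => hS.sdiff

lemma union (hS : ConcentratesAt S a) (hT : ConcentratesAt T a) : ConcentratesAt (S ∪ T) a :=
  fun U hU => by simpa only [union_sdiff_distrib] using (hS U hU).union (hT U hU)

lemma biUnion {I : Set ι} (hI : I.Finite) {S : ι → Set X}
    (hS : ∀ i ∈ I, ConcentratesAt (S i) a) : ConcentratesAt (⋃ i ∈ I, S i) a :=
  fun U hU => by simpa only [iUnion_sdiff] using hI.biUnion fun i hi => hS i hi U hU

lemma range_of_tendsto {f : ι → X} (hf : Tendsto f cofinite (𝓝 a)) :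
    ConcentratesAt (range f) a := fun U hU =>
  (Finite.image f (hf hU)).subset <| by
    rintro _ ⟨⟨i, rfl⟩, hi⟩
    exact mem_image_of_mem f hi

lemma tendsto_subtype_val (hS : ConcentratesAt S a) :
    Tendsto (Subtype.val : S → X) cofinite (𝓝 a) := fun U hU =>
  (hS U hU).preimage Subtype.val_injective.injOn |>.subset fun x hx => ⟨x.2, hx⟩

lemma tendsto_of_tendsto_cofinite (hS : ConcentratesAt S a) {l : Filter ι} {u : ι → X}
    (hu : Tendsto u l cofinite) (huS : ∀ i, u i ∈ S) : Tendsto u l (𝓝 a) := fun U hU =>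
  (hu.eventually (hS U hU).eventually_cofinite_notMem).mono fun i hi =>
    by_contra fun hiU => hi ⟨huS i, hiU⟩

end TopologicalSpace

lemma mul {M : Type*} [TopologicalSpace M] [MulZeroClass M] [ContinuousMul M] {S T : Set M}
    (hS : ConcentratesAt S 0) (hT : ConcentratesAt T 0) : ConcentratesAt (S * T) 0 := by
  refine (range_of_tendsto
    (tendsto_mul_cofinite_nhds_zero hS.tendsto_subtype_val hT.tendsto_subtype_val)).mono ?_
  rintro _ ⟨s, hs, t, ht, rfl⟩
  exact ⟨(⟨s, hs⟩, ⟨t, ht⟩), rfl⟩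

lemma pow {M : Type*} [TopologicalSpace M] [MonoidWithZero M] [ContinuousMul M] {S : Set M}
    (hS : ConcentratesAt S 0) (n : ℕ) : ConcentratesAt (S ^ n) 0 := by
  induction n with
  | zero => simpa only [pow_zero] using of_finite finite_one
  | succ n ih => simpa only [pow_succ] using ih.mul hS

end ConcentratesAt

lemma Vset_subset_union_biUnion_mul_pow (k : ℕ) (H : Set (ℕ → ℝ)) (W : Set ℝ) :
    Vset k H W ⊆ {0, 1} ∪ W ∪ ⋃ n ∈ Iic k, W * (⋃ η ∈ H, range η) ^ n := by
  refine union_subset_union_right _ ?_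
  rintro _ ⟨w, hw, n, hn, idx, e, he, rfl⟩
  have hprod : ∏ ℓ, e ℓ (idx ℓ) ∈ (⋃ η ∈ H, range η) ^ n := by
    simpa only [Finset.prod_const, Finset.card_univ, Fintype.card_fin] using
      finsetProd_mem_finsetProd Finset.univ (fun _ => ⋃ η ∈ H, range η) _
        fun ℓ _ => mem_biUnion (he ℓ) (mem_range_self (idx ℓ))
  exact mem_biUnion hn (mul_mem_mul hw hprod)

lemma concentratesAt_zero_Vset (k : ℕ) {H : Set (ℕ → ℝ)} (hHfin : H.Finite)
    (hH : ∀ η ∈ H, Tendsto η atTop (𝓝 0)) {W : Set ℝ} (hW : W.Finite) :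
    ConcentratesAt (Vset k H W) 0 := by
  have hvalues : ConcentratesAt (⋃ η ∈ H, range η) 0 :=
    .biUnion hHfin fun η hη => .range_of_tendsto (Nat.cofinite_eq_atTop ▸ hH η hη)
  have hproducts : ConcentratesAt (⋃ n ∈ Iic k, W * (⋃ η ∈ H, range η) ^ n) 0 :=
    .biUnion (finite_Iic k) fun n _ => (ConcentratesAt.of_finite hW).mul (hvalues.pow n)
  exact ((ConcentratesAt.of_finite ((toFinite {0, 1}).union hW)).union hproducts).mono
    (Vset_subset_union_biUnion_mul_pow k H W)

lemma exists_forall_ge_eq_or_tendsto_cofinite_of_antitone {ι α : Type*} [Preorder ι]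
    [IsDirectedOrder ι] [Nonempty ι] [PartialOrder α] {u : ι → α} (hu : Antitone u) :
    (∃ N, ∀ n, N ≤ n → u n = u N) ∨ Tendsto u atTop cofinite := by
  refine or_iff_not_imp_right.2 fun hnot => ?_
  obtain ⟨x, hx⟩ : ∃ x, ∃ᶠ n in atTop, u n = x := by
    simpa only [Tendsto, le_cofinite_iff_eventually_ne, eventually_map, not_forall,
      Filter.Frequently] using hnot
  obtain ⟨N, rfl⟩ := hx.exists
  refine ⟨N, fun n hn => (hu hn).antisymm ?_⟩
  obtain ⟨m, hnm, hm⟩ := frequently_atTop.1 hx n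
  exact hm ▸ hu hnm

theorem stmt_10_general {k : ℕ} {H : Set (ℕ → ℝ)} (hHfin : H.Finite)
    (hH : ∀ η ∈ H, Tendsto η atTop (𝓝 0)) {W : Set ℝ} (hWfin : W.Finite)
    {u : ℕ → ℝ} (hu : Antitone u) (hmem : ∀ n, u n ∈ Vset k H W) :
    Tendsto u atTop (𝓝 0) ∨ ∃ N, ∀ n, N ≤ n → u n = u N :=
  (exists_forall_ge_eq_or_tendsto_cofinite_of_antitone hu).symm.imp_left fun hcofinite =>
    (concentratesAt_zero_Vset k hHfin hH hWfin).tendsto_of_tendsto_cofinite hcofinite hmem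

end Concentration

/-- Every non-increasing real sequence with values in `V_{k,H,W}` either
converges to `0` or is eventually constant. -/
theorem stmt_10 (k : ℕ) (H : Set (ℕ → ℝ)) (hHfin : H.Finite)
    (hH : ∀ η ∈ H, IsDiscounting η)
    (W : Set ℝ) (hWfin : W.Finite) (hWsub : W ⊆ Set.Icc (0:ℝ) 1)
    (u : ℕ → ℝ) (hu : Antitone u) (hmem : ∀ n, u n ∈ Vset k H W) :
    Filter.Tendsto u Filter.atTop (nhds 0) ∨ ∃ N, ∀ n, N ≤ n → u n = u N :=
  stmt_10_general hHfin (fun η hη => (hH η hη).2.2) hWfin hu hmem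

end
end

section
/- Let η be a discounting sequence, p ∈ AP, and let φ be the quantifier-free HyperLTL_temp formula G(F_η p_π) ∨ F G ¬p_π, evaluated on a single trace t (via the assignment π ↦ t). Then: (a) for every Boolean lasso trace t, ⟦φ⟧(t) > 0; (b) there exists a Boolean trace t with ⟦φ⟧(t) = 0 (for instance the trace in which p holds exactly at the positions k² for k ∈ ℕ). Consequently, the set of Boolean traces t with ⟦φ⟧(t) = 0 is nonempty but contains no lasso. -/
open Set

noncomputable section

/-- Lassos: eventually periodic traces, i.e. traces of the form `u·v^ω`. -/
def IsLasso {AP : Type} (t : Trace AP) : Prop :=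
  ∃ N c : ℕ, 0 < c ∧ ∀ n, N ≤ n → t (n + c) = t n

/-- Quantifier-free HyperLTL_temp formulas, over a set `D` (indexing the discounting
sequences). -/
inductive TQF (AP Var D : Type) : Type where
  | atom : AP → Var → TQF AP Var D
  | neg : TQF AP Var D → TQF AP Var D
  | or : TQF AP Var D → TQF AP Var D → TQF AP Var D
  | next : TQF AP Var D → TQF AP Var D
  | untl : TQF AP Var D → TQF AP Var D → TQF AP Var D
  | untlD : D → TQF AP Var D → TQF AP Var D → TQF AP Var D

/-- HyperLTL_temp formulas: a prefix of quantifiers over a quantifier-free formula. -/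
inductive TForm (AP Var D : Type) : Type where
  | qf : TQF AP Var D → TForm AP Var D
  | ex : Var → TForm AP Var D → TForm AP Var D
  | all : Var → TForm AP Var D → TForm AP Var D

variable {AP Var D : Type}

/-- Satisfaction value of quantifier-free HyperLTL_temp formulas, where `η` interprets the
discounting sequence indices. -/
def tsemQF (η : D → ℕ → ℝ) : TQF AP Var D → (Var → Trace AP) → Set (Trace AP) → ℝ
  | .atom p π, ρ, _ => (ρ π 0 p : ℝ)
  | .neg φ, ρ, T => 1 - tsemQF η φ ρ T
  | .or φ₁ φ₂, ρ, T => max (tsemQF η φ₁ ρ T) (tsemQF η φ₂ ρ T)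
  | .next φ, ρ, T => tsemQF η φ (shiftA ρ 1) T
  | .untl φ₁ φ₂, ρ, T =>
      ⨆ i : ℕ, min (tsemQF η φ₂ (shiftA ρ i) T)
        (prefMin (fun j => tsemQF η φ₁ (shiftA ρ j) T) i)
  | .untlD d φ₁ φ₂, ρ, T =>
      ⨆ i : ℕ, min (η d i * tsemQF η φ₂ (shiftA ρ i) T)
        (prefMin (fun j => η d j * tsemQF η φ₁ (shiftA ρ j) T) i)


/-- The formula `true = p_π ∨ ¬ p_π`. -/
def ttF (p : AP) : TQF AP Unit Unit := .or (.atom p ()) (.neg (.atom p ()))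

/-- The eventually operator `F φ = true U φ`. -/
def Fop (p : AP) (φ : TQF AP Unit Unit) : TQF AP Unit Unit := .untl (ttF p) φ

/-- The globally operator `G φ = ¬ F ¬ φ`. -/
def Gop (p : AP) (φ : TQF AP Unit Unit) : TQF AP Unit Unit := .neg (Fop p (.neg φ))

/-- The discounted eventually operator `F_η φ = true U_η φ`. -/
def FdOp (p : AP) (φ : TQF AP Unit Unit) : TQF AP Unit Unit := .untlD () (ttF p) φ

/-- The formula `φ = G (F_η p_π) ∨ F G ¬ p_π`. -/
def exForm (p : AP) : TQF AP Unit Unit :=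
  .or (Gop p (FdOp p (.atom p ()))) (Fop p (Gop p (.neg (.atom p ()))))

/-- The satisfaction value `⟦φ⟧(t)` of `φ = G (F_η p_π) ∨ F G ¬ p_π` on a single trace. -/
def tval {AP : Type} (η : ℕ → ℝ) (p : AP) (t : Trace AP) : ℝ :=
  tsemQF (fun _ : Unit => η) (exForm p) (fun _ : Unit => t) Set.univ

/-!
On an arbitrary trace `true` has value at least `1/2`, which is enough for the positivity half.
A lasso either is eventually free of `p`, so that `F G ¬p` is positive, or it meets a fixed positive
weight of `p` within a bounded number `K` of steps from every position, so that `F_η p` is bounded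
below by a positive constant depending only on that weight and on `η 0, …, η K`.

If `p` holds infinitely often on a Boolean trace, then `F G ¬p` has value `0`; if moreover `p`
is absent from arbitrarily long intervals, then discounting makes `F_η p` arbitrarily small at
their starting points. The perfect squares have both properties.
-/

open Filter

theorem prefMin_le_one (g : ℕ → ℝ) : ∀ n, prefMin g n ≤ 1
  | 0 => le_rfl
  | n + 1 => (min_le_left _ _).trans (prefMin_le_one g n)

theorem prefMin_antitone (g : ℕ → ℝ) : Antitone (prefMin g) :=
  antitone_nat_of_succ_le fun _ => min_le_left _ _

theorem prefMin_mono {g h : ℕ → ℝ} (hgh : ∀ j, g j ≤ h j) : ∀ n, prefMin g n ≤ prefMin h n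
  | 0 => le_rfl
  | n + 1 => min_le_min (prefMin_mono hgh n) (hgh n)

theorem le_prefMin {g : ℕ → ℝ} {c : ℝ} (hc : c ≤ 1) (hg : ∀ j, c ≤ g j) : ∀ n, c ≤ prefMin g n
  | 0 => hc
  | n + 1 => le_min (le_prefMin hc hg n) (hg n)

theorem prefMin_pos {g : ℕ → ℝ} (hg : ∀ j, 0 < g j) : ∀ n, 0 < prefMin g n
  | 0 => one_pos
  | n + 1 => lt_min (prefMin_pos hg n) (hg n)

theorem bddAbove_range_min_prefMin (f g : ℕ → ℝ) :
    BddAbove (range fun i => min (f i) (prefMin g i)) :=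
  ⟨1, forall_mem_range.2 fun i => (min_le_right _ _).trans (prefMin_le_one g i)⟩

theorem shiftA_shiftA (ρ : Var → Trace AP) (m n : ℕ) :
    shiftA (shiftA ρ m) n = shiftA ρ (m + n) := by
  funext π k
  simp only [shiftA, add_assoc, add_comm n m]

theorem tsemQF_atom_shiftA (η : D → ℕ → ℝ) (p : AP) (π : Var) (ρ : Var → Trace AP) (n : ℕ)
    (T : Set (Trace AP)) : tsemQF η (.atom p π) (shiftA ρ n) T = ρ π n p := by
  simp only [tsemQF, shiftA, zero_add]

section Operators

variable (η : Unit → ℕ → ℝ) (p : AP) {φ : TQF AP Unit Unit} {ρ : Unit → Trace AP}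
  {T : Set (Trace AP)} {c : ℝ}

theorem half_le_tsemQF_ttF (ρ : Unit → Trace AP) (T : Set (Trace AP)) :
    1 / 2 ≤ tsemQF η (ttF p) ρ T := by
  simp only [ttF, tsemQF, le_max_iff]
  by_contra! h
  linarith

theorem tsemQF_ttF_of_isBoolTrace (hρ : IsBoolTrace (ρ ())) (n : ℕ) :
    tsemQF η (ttF p) (shiftA ρ n) T = 1 := by
  simp only [ttF, tsemQF, shiftA, zero_add]
  rcases hρ n p with h | h <;> simp [h]

theorem min_half_le_tsemQF_Fop (φ : TQF AP Unit Unit) (ρ : Unit → Trace AP) (T : Set (Trace AP))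
    (i : ℕ) : min (tsemQF η φ (shiftA ρ i) T) (1 / 2) ≤ tsemQF η (Fop p φ) ρ T :=
  le_ciSup_of_le (bddAbove_range_min_prefMin _ _) i <|
    min_le_min_left _ <| le_prefMin (by norm_num) (fun _ => half_le_tsemQF_ttF η p _ T) i

theorem tsemQF_Fop_le (h : ∀ i, tsemQF η φ (shiftA ρ i) T ≤ c) : tsemQF η (Fop p φ) ρ T ≤ c :=
  ciSup_le fun i => (min_le_left _ _).trans (h i)

theorem le_tsemQF_Gop (h : ∀ i, c ≤ tsemQF η φ (shiftA ρ i) T) : c ≤ tsemQF η (Gop p φ) ρ T :=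
  le_sub_comm.1 <| tsemQF_Fop_le η p fun i => sub_le_sub_left (h i) 1

theorem tsemQF_Gop_le_max (hρ : IsBoolTrace (ρ ())) (φ : TQF AP Unit Unit) (T : Set (Trace AP))
    (i : ℕ) : tsemQF η (Gop p φ) ρ T ≤ max (tsemQF η φ (shiftA ρ i) T) 0 := by
  have hprefix : 1 ≤ prefMin (fun j => tsemQF η (ttF p) (shiftA ρ j) T) i :=
    le_prefMin le_rfl (fun j => (tsemQF_ttF_of_isBoolTrace η p hρ j).ge) i
  have hF : min (1 - tsemQF η φ (shiftA ρ i) T) 1 ≤ tsemQF η (Fop p φ.neg) ρ T :=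
    le_ciSup_of_le (bddAbove_range_min_prefMin _ _) i (min_le_min_left _ hprefix)
  calc 1 - tsemQF η (Fop p φ.neg) ρ T
      ≤ 1 - min (1 - tsemQF η φ (shiftA ρ i) T) 1 := sub_le_sub_left hF 1
    _ = max (tsemQF η φ (shiftA ρ i) T) 0 := by
      rw [← max_sub_sub_left, sub_sub_cancel, sub_self]

variable {η}

theorem prefMin_le_tsemQF_FdOp (hη : ∀ j, 0 ≤ η () j) (hc : c ≤ 1 / 2) {i : ℕ}
    (hφ : c ≤ tsemQF η φ (shiftA ρ i) T) :
    prefMin (fun j => η () j * c) (i + 1) ≤ tsemQF η (FdOp p φ) ρ T := by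
  refine le_ciSup_of_le (bddAbove_range_min_prefMin _ _) i ?_
  rw [prefMin, min_comm]
  refine min_le_min (mul_le_mul_of_nonneg_left hφ (hη i)) (prefMin_mono (fun j => ?_) i)
  exact mul_le_mul_of_nonneg_left (hc.trans (half_le_tsemQF_ttF η p _ T)) (hη j)

theorem tsemQF_FdOp_le (h : ∀ i, η () i * tsemQF η φ (shiftA ρ i) T ≤ c) :
    tsemQF η (FdOp p φ) ρ T ≤ c :=
  ciSup_le fun i => (min_le_left _ _).trans (h i)

end Operators

section Value

variable {η : ℕ → ℝ} {p : AP} {t : Trace AP}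

theorem tval_nonneg (η : ℕ → ℝ) (p : AP) (t : Trace AP) : 0 ≤ tval η p t := by
  refine le_max_of_le_right (le_trans (le_min ?_ (by norm_num))
    (min_half_le_tsemQF_Fop _ p _ _ _ 0))
  exact le_tsemQF_Gop _ p fun i => sub_nonneg.2 (shiftA (shiftA _ 0) i () 0 p).2.2

theorem tval_pos_of_eventually_eq_zero (η : ℕ → ℝ) (h : ∀ᶠ n in atTop, t n p = 0) :
    0 < tval η p t := by
  obtain ⟨N, hN⟩ := eventually_atTop.1 h
  refine lt_max_of_lt_right ((lt_min ?_ (by norm_num)).trans_le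
    (min_half_le_tsemQF_Fop _ p _ _ _ N))
  refine one_pos.trans_le (le_tsemQF_Gop _ p fun i => ?_)
  rw [shiftA_shiftA, tsemQF, tsemQF_atom_shiftA, hN _ (Nat.le_add_right N i)]
  simp only [Icc.coe_zero, sub_zero, le_refl]

theorem tval_pos_of_bounded_gaps (hη : ∀ i, 0 < η i) {a : ℝ} (ha : 0 < a) {K : ℕ}
    (h : ∀ n, ∃ i ≤ K, a ≤ t (n + i) p) : 0 < tval η p t := by
  set c := min a (1 / 2)
  have hc : 0 < c := lt_min ha (by norm_num)
  have hδ : 0 < prefMin (fun j => η j * c) (K + 1) := prefMin_pos (fun j => mul_pos (hη j) hc) _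
  refine lt_max_of_lt_left (hδ.trans_le (le_tsemQF_Gop _ p fun n => ?_))
  obtain ⟨i, hiK, hi⟩ := h n
  have hweight : c ≤ tsemQF (fun _ : Unit => η) (.atom p ())
      (shiftA (shiftA (fun _ => t) n) i) univ := by
    rw [shiftA_shiftA, tsemQF_atom_shiftA]
    exact (min_le_left _ _).trans hi
  exact (prefMin_antitone _ (Nat.succ_le_succ hiK)).trans
    (prefMin_le_tsemQF_FdOp p (fun j => (hη j).le) (min_le_right _ _) hweight)

theorem tsemQF_Fop_Gop_neg_atom_nonpos (η : Unit → ℕ → ℝ) (ht : IsBoolTrace t)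
    (h : ∃ᶠ n in atTop, t n p = 1) (T : Set (Trace AP)) :
    tsemQF η (Fop p (Gop p (.neg (.atom p ())))) (fun _ => t) T ≤ 0 := by
  refine tsemQF_Fop_le η p fun n => ?_
  obtain ⟨m, hnm, hm⟩ := frequently_atTop.1 h n
  refine (tsemQF_Gop_le_max η p (fun i => ht (i + n)) _ T (m - n)).trans (max_le ?_ le_rfl)
  rw [shiftA_shiftA, tsemQF, tsemQF_atom_shiftA, Nat.add_sub_cancel' hnm, hm]
  simp only [Icc.coe_one, sub_self, le_refl]

theorem tsemQF_Gop_FdOp_atom_nonpos (hη : Tendsto η atTop (nhds 0)) (ht : IsBoolTrace t)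
    (h : ∀ k, ∃ n, ∀ i < k, t (n + i) p = 0) (T : Set (Trace AP)) :
    tsemQF (fun _ : Unit => η) (Gop p (FdOp p (.atom p ()))) (fun _ => t) T ≤ 0 := by
  refine le_of_forall_pos_le_add fun ε hε => ?_
  rw [zero_add]
  obtain ⟨k, hk⟩ := eventually_atTop.1 (hη.eventually_le_const hε)
  obtain ⟨n, hn⟩ := h k
  refine (tsemQF_Gop_le_max _ p ht _ T n).trans (max_le (tsemQF_FdOp_le p fun i => ?_) hε.le)
  rw [shiftA_shiftA, tsemQF_atom_shiftA]
  rcases lt_or_ge i k with hik | hki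
  · simpa only [hn i hik, Icc.coe_zero, mul_zero] using hε.le
  · exact (mul_le_mul_of_nonneg_right (hk i hki) (t (n + i) p).2.1).trans
      (mul_le_of_le_one_right hε.le (t (n + i) p).2.2)

theorem tval_eq_zero_of_frequently_of_unbounded_gaps (hη : Tendsto η atTop (nhds 0))
    (ht : IsBoolTrace t) (hfreq : ∃ᶠ n in atTop, t n p = 1)
    (hgaps : ∀ k, ∃ n, ∀ i < k, t (n + i) p = 0) : tval η p t = 0 :=
  le_antisymm (max_le (tsemQF_Gop_FdOp_atom_nonpos hη ht hgaps univ)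
    (tsemQF_Fop_Gop_neg_atom_nonpos _ ht hfreq univ)) (tval_nonneg η p t)

end Value

theorem IsLasso.exists_recurrence_bound {t : Trace AP} (ht : IsLasso t) :
    ∃ N, ∀ m ≥ N, ∃ K, ∀ n, ∃ i ≤ K, t (n + i) = t m := by
  obtain ⟨N, c, hc, hper⟩ := ht
  refine ⟨N, fun m hm => ⟨m + c, fun n => ⟨m + (c - n % c), by omega, ?_⟩⟩⟩
  have hmul (k : ℕ) : t (m + c * k) = t m := by
    induction k with
    | zero => rfl
    | succ k ih => rw [Nat.mul_succ, ← add_assoc, hper _ (hm.trans (Nat.le_add_right _ _)), ih]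
  have hindex : n + (m + (c - n % c)) = m + c * (n / c + 1) := by
    have := Nat.mod_lt n hc
    have := Nat.div_add_mod n c
    rw [mul_add]
    omega
  rw [hindex, hmul]

theorem tval_pos_of_isLasso {η : ℕ → ℝ} (hη : ∀ i, 0 < η i) (p : AP) {t : Trace AP}
    (ht : IsLasso t) : 0 < tval η p t := by
  obtain ⟨N, hN⟩ := ht.exists_recurrence_bound
  by_cases hzero : ∀ m ≥ N, t m p = 0
  · exact tval_pos_of_eventually_eq_zero η (eventually_atTop.2 ⟨N, hzero⟩)
  · push Not at hzero
    obtain ⟨m, hm, hmp⟩ := hzero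
    obtain ⟨K, hK⟩ := hN m hm
    refine tval_pos_of_bounded_gaps hη (unitInterval.pos_iff_ne_zero.2 hmp) (K := K) fun n => ?_
    obtain ⟨i, hi, hrec⟩ := hK n
    exact ⟨i, hi, by rw [hrec]⟩

/-- The trace in which every proposition holds exactly at the perfect squares; it serves as
the Boolean trace of value `0`. -/
def squareTrace (AP : Type) : Trace AP := fun n _ => if IsSquare n then 1 else 0

theorem isBoolTrace_squareTrace : IsBoolTrace (squareTrace AP) := by
  intro n p
  by_cases h : IsSquare n <;> simp [squareTrace, h]

theorem frequently_squareTrace_eq_one (p : AP) : ∃ᶠ n in atTop, squareTrace AP n p = 1 :=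
  frequently_atTop.2 fun n => ⟨n * n, Nat.le_mul_self n, if_pos (IsSquare.mul_self n)⟩

theorem squareTrace_unbounded_gaps (p : AP) (k : ℕ) :
    ∃ n, ∀ i < k, squareTrace AP (n + i) p = 0 := by
  refine ⟨k * k + 1, fun i hi => if_neg ?_⟩
  rintro ⟨r, hr⟩
  exact Nat.not_exists_sq (m := k) (by omega) (by linarith) ⟨r, hr.symm⟩

theorem tval_squareTrace {η : ℕ → ℝ} (hη : Tendsto η atTop (nhds 0)) (p : AP) :
    tval η p (squareTrace AP) = 0 :=
  tval_eq_zero_of_frequently_of_unbounded_gaps hη isBoolTrace_squareTrace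
    (frequently_squareTrace_eq_one p) (squareTrace_unbounded_gaps p)

theorem IsDiscounting.pos {η : ℕ → ℝ} (hη : IsDiscounting η) (i : ℕ) : 0 < η i :=
  (hη.2.1 (i + 1)).1.trans_lt (hη.1 i.lt_succ_self)

theorem stmt_13_general {η : ℕ → ℝ} (hpos : ∀ i, 0 < η i) (hlim : Tendsto η atTop (nhds 0))
    (p : AP) :
    (∀ t : Trace AP, IsLasso t → 0 < tval η p t) ∧
      ∃ t : Trace AP, IsBoolTrace t ∧ tval η p t = 0 :=
  ⟨fun _ => tval_pos_of_isLasso hpos p,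
    squareTrace AP, isBoolTrace_squareTrace, tval_squareTrace hlim p⟩

/-- Example: a non-ω-regular value-0 language. For the formula
`φ = G (F_η p) ∨ F G ¬ p`: (a) every Boolean lasso has positive satisfaction value;
(b) some Boolean trace has satisfaction value `0`; consequently the set of Boolean traces of
value `0` is nonempty but contains no lasso. -/
theorem stmt_13 {AP : Type} (η : ℕ → ℝ) (hη : IsDiscounting η) (p : AP) :
    (∀ t : Trace AP, IsBoolTrace t → IsLasso t → 0 < tval η p t) ∧
    (∃ t : Trace AP, IsBoolTrace t ∧ tval η p t = 0) ∧
    ({t : Trace AP | IsBoolTrace t ∧ tval η p t = 0}.Nonempty ∧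
      ∀ t ∈ {t : Trace AP | IsBoolTrace t ∧ tval η p t = 0}, ¬ IsLasso t) := by
  obtain ⟨hlasso, t, ht⟩ := stmt_13_general hη.pos hη.2.2 p
  exact ⟨fun s _ => hlasso s, ⟨t, ht⟩, ⟨t, ht⟩, fun s hs hs_lasso => (hlasso s hs_lasso).ne' hs.2⟩

end
end
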